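/- Critical Bernoulli percolation on ℤ²: the critical point satisfies p_c(ℤ²) = 1/2, and there exists α > 0 such that (1/2)·n^{−1} ≤ ℙ_{1/2}[0 ↔ ∂Λ_n] ≤ n^{−α} for all integers n ≥ 1; in particular θ(1/2) = 0. -/

import Mathlib

open MeasureTheory

namespace Perc

/-- Vertices of `ℤ^d`. -/
abbrev Vertex (d : ℕ) := Fin d → ℤ

/-- Nearest-neighbour adjacency in `ℤ^d`: `‖x − y‖₁ = 1`. -/
def adj {d : ℕ} (x y : Vertex d) : Prop :=
  (∑ i, (x i - y i).natAbs) = 1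

/-- The unordered pair `e` is a nearest-neighbour edge of `ℤ^d`. -/
def IsEdge {d : ℕ} (e : Sym2 (Vertex d)) : Prop :=
  ∃ x y : Vertex d, adj x y ∧ e = s(x, y)

/-- The set `E` of nearest-neighbour edges of `ℤ^d`. -/
abbrev Edge (d : ℕ) := {e : Sym2 (Vertex d) // IsEdge e}

/-- Percolation configurations `ω ∈ {0,1}^E`. -/
abbrev Config (d : ℕ) := Edge d → Bool

/-- One step along an open edge of `ω`. -/
def step {d : ℕ} (ω : Config d) (x y : Vertex d) : Prop :=
  ∃ h : adj x y, ω ⟨s(x, y), x, y, h, rfl⟩ = true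

/-- `x` and `y` are joined by a path of open edges. -/
def Conn {d : ℕ} (ω : Config d) : Vertex d → Vertex d → Prop :=
  Relation.ReflTransGen (step ω)

/-- The open cluster of `x` in `ω`. -/
def cluster {d : ℕ} (ω : Config d) (x : Vertex d) : Set (Vertex d) :=
  {y | Conn ω x y}

/-- The box `Λ_n = {−n, …, n}^d`. -/
def box (d n : ℕ) : Set (Vertex d) := {x | ∀ i, |x i| ≤ (n : ℤ)}

/-- `∂Λ_n`: vertices of `Λ_n` having a nearest neighbour outside `Λ_n`. -/
def boxBoundary (d n : ℕ) : Set (Vertex d) :=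
  {x | x ∈ box d n ∧ ∃ y, adj x y ∧ y ∉ box d n}

/-- The origin of `ℤ^d`. -/
def origin (d : ℕ) : Vertex d := fun _ => 0

/-- The event `{0 ↔ ∂Λ_n}`. -/
def ZeroToBoundary (d n : ℕ) : Set (Config d) :=
  {ω | ∃ y ∈ boxBoundary d n, Conn ω (origin d) y}

/-- The event `{0 ↔ ∞}` that the open cluster of the origin is infinite. -/
def ZeroToInfinity (d : ℕ) : Set (Config d) :=
  {ω | (cluster ω (origin d)).Infinite}

/-- `μ` is the law of i.i.d. Bernoulli(p) edge variables: it is a probability measure on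
`{0,1}^E` under which every finite cylinder has the corresponding product probability. -/
def IsBernoulli (d : ℕ) (p : ℝ) (μ : Measure (Config d)) : Prop :=
  IsProbabilityMeasure μ ∧
    ∀ (s : Finset (Edge d)) (f : Edge d → Bool),
      μ {ω : Config d | ∀ e ∈ s, ω e = f e} =
        ENNReal.ofReal (∏ e ∈ s, if f e then p else 1 - p)

/-!
At `p = 1 / 2` the dual configuration has the law of the configuration itself, so that squares are
crossed with probability at least `1 / 2`; a union bound over the left side of a square gives the
lower bound on the one-arm probability.

For the upper bound, let `k(r)` be the least height such that the left side of the square of radius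
`r` is connected with probability at least `1 / 8` to the part of heights `[0, k(r)]` of the right
side (Tassion). If `k(2 r) ≤ 4 k(r)`, reflected copies of these connections must meet, and the
Harris inequality bounds from below the crossing probability of a `6 × 1` rectangle at scale `5 r`.
Good scales recur within a bounded factor: were `k(t) ≤ s` for too many scales `t` beyond a good
scale `s`, circuits in the dual annuli at these scales would separate the interval of heights
`[0, s]` from the far side of a large square; and once `k(t) > s`, the bound `k(r) ≤ r` prevents `k`
from more than quadrupling at every doubling of the scale. Dual circuits in disjoint annuli are
independent, which gives polynomial decay.

For `p > 1 / 2` the argument of Duminil-Copin and Tassion applies. For a finite set `S ∋ 0` let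
`φ(S)` be `p` times the expected number of boundary bonds of `S` having an end connected to `0` in
`S`. If `φ(S) < 1` at `p = 1 / 2`, the one-arm probability decays exponentially, contradicting the
lower bound. Hence the expected number is at least `2` for all `S` and all `p ≥ 1 / 2`, and
Russo's formula, applied after exploring the complement of the cluster of the boundary, shows that
the one-arm probability `θ` satisfies `θ' ≥ 2 (1 - θ)`, so that `θ ≥ 1 - exp (1 - 2 p)`.
-/

/-! ### Bernoulli product measures -/

section BernoulliProduct

open ProbabilityTheory

variable {ι : Type*}

/-- The law of i.i.d. Bernoulli(`p`) variables indexed by `ι`. -/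
noncomputable def percMeasure (p : unitInterval) : Measure (ι → Bool) :=
  Measure.infinitePi fun _ ↦ bernoulliMeasure true false p

instance (p : unitInterval) : IsProbabilityMeasure (percMeasure p : Measure (ι → Bool)) :=
  inferInstanceAs (IsProbabilityMeasure (Measure.infinitePi _))

lemma percMeasure_real_open (p : unitInterval) (e : ι) :
    (percMeasure p).real {ω : ι → Bool | ω e = true} = p := by
  have heval := measurePreserving_eval_infinitePi (fun _ : ι ↦ bernoulliMeasure true false p) e
  refine (heval.measureReal_preimage (MeasurableSet.singleton true).nullMeasurableSet).trans ?_
  simp [bernoulliMeasure_real_apply_of_mem_of_notMem p (.singleton true)]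

/-- The event `A` is determined by the states of the coordinates in the finite set `F`. -/
def DeterminedBy (F : Finset ι) (A : Set (ι → Bool)) : Prop :=
  DependsOn (· ∈ A) (F : Set ι)

/-- The configuration equal to `η` on `F` and closed elsewhere. -/
noncomputable def extend (F : Finset ι) (η : F → Bool) : ι → Bool :=
  Function.extend (↑) η fun _ ↦ false

lemma extend_coe {F : Finset ι} (η : F → Bool) (e : F) : extend F η e = η e :=
  Subtype.val_injective.extend_apply η _ e

lemma extend_of_notMem {F : Finset ι} (η : F → Bool) {e : ι} (he : e ∉ F) :
    extend F η e = false :=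
  Function.extend_apply' _ _ _ fun ⟨a, ha⟩ ↦ he (ha ▸ a.2)

lemma extend_mono (F : Finset ι) : Monotone (extend F) := fun η ζ h e ↦ by
  by_cases he : e ∈ F
  · simpa only [extend_coe _ (⟨e, he⟩ : F)] using h ⟨e, he⟩
  · simp only [extend_of_notMem _ he, le_refl]

lemma extend_update [DecidableEq ι] {F : Finset ι} (η : F → Bool) (e : F) (b : Bool) :
    extend F (Function.update η e b) = Function.update (extend F η) e b := by
  ext f
  by_cases hf : f ∈ F
  · lift f to F using hf
    simp only [extend_coe, Function.update_apply, Subtype.coe_inj]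
  · rw [extend_of_notMem _ hf, Function.update_of_ne (fun h ↦ hf (by rw [h]; exact e.2)),
      extend_of_notMem _ hf]

namespace DeterminedBy

variable {F G : Finset ι} {A B : Set (ι → Bool)}

lemma mem_iff (h : DeterminedBy F A) {ω ω' : ι → Bool} (hω : ∀ e ∈ F, ω e = ω' e) :
    ω ∈ A ↔ ω' ∈ A :=
  (h hω).to_iff

lemma of_imp (h : ∀ ω ω' : ι → Bool, (∀ e ∈ F, ω e = ω' e) → ω ∈ A → ω' ∈ A) :
    DeterminedBy F A :=
  fun ω ω' hω ↦ propext ⟨h ω ω' hω, h ω' ω fun e he ↦ (hω e he).symm⟩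

lemma mono (h : DeterminedBy F A) (hFG : F ⊆ G) : DeterminedBy G A :=
  DependsOn.mono (Finset.coe_subset.2 hFG) h

lemma compl (h : DeterminedBy F A) : DeterminedBy F Aᶜ :=
  fun _ _ hω ↦ congrArg Not (h hω)

lemma inter (hA : DeterminedBy F A) (hB : DeterminedBy F B) : DeterminedBy F (A ∩ B) :=
  fun _ _ hω ↦ congrArg₂ And (hA hω) (hB hω)

lemma inter_union [DecidableEq ι] (hA : DeterminedBy F A) (hB : DeterminedBy G B) :
    DeterminedBy (F ∪ G) (A ∩ B) :=
  (hA.mono Finset.subset_union_left).inter (hB.mono Finset.subset_union_right)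

lemma biInter [DecidableEq ι] {κ : Type*} {s : Finset κ} {F : κ → Finset ι}
    {A : κ → Set (ι → Bool)} (h : ∀ i ∈ s, DeterminedBy (F i) (A i)) :
    DeterminedBy (s.biUnion F) (⋂ i ∈ s, A i) :=
  .of_imp fun _ _ hω hmem ↦ Set.mem_iInter₂.2 fun i hi ↦
    ((h i hi).mono (Finset.subset_biUnion_of_mem F hi)).mem_iff hω |>.1
      (Set.mem_iInter₂.1 hmem i hi)

lemma restrict_preimage (h : DeterminedBy F A) :
    F.restrict ⁻¹' {η : F → Bool | extend F η ∈ A} = A :=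
  Set.ext fun _ ↦ h.mem_iff fun e he ↦ extend_coe _ (⟨e, he⟩ : F)

lemma measurableSet (h : DeterminedBy F A) : MeasurableSet A := by
  rw [← h.restrict_preimage]
  exact Finset.measurable_restrict F (Set.toFinite _).measurableSet

end DeterminedBy

lemma percMeasure_indep (p : unitInterval) {F G : Finset ι} (hFG : Disjoint F G)
    {A B : Set (ι → Bool)} (hA : DeterminedBy F A) (hB : DeterminedBy G B) :
    (percMeasure p).real (A ∩ B) = (percMeasure p).real A * (percMeasure p).real B := by
  have hind : iIndepFun (fun (e : ι) (ω : ι → Bool) ↦ ω e) (percMeasure p) :=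
    iIndepFun_infinitePi (X := fun _ ↦ id) fun _ ↦ measurable_id
  have := (hind.indepFun_finset F G hFG measurable_pi_apply).measure_inter_preimage_eq_mul
    {η | extend F η ∈ A} {η | extend G η ∈ B} (Set.toFinite _).measurableSet
    (Set.toFinite _).measurableSet
  have hFG' : (percMeasure p) (A ∩ B) = percMeasure p A * percMeasure p B := by
    rwa [← hA.restrict_preimage, ← hB.restrict_preimage]
  rw [measureReal_def, hFG', ENNReal.toReal_mul, measureReal_def, measureReal_def]

lemma percMeasure_real_biInter (p : unitInterval) {κ : Type*} {s : Finset κ} {F : κ → Finset ι}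
    {A : κ → Set (ι → Bool)} (hF : (s : Set κ).PairwiseDisjoint F)
    (hA : ∀ i ∈ s, DeterminedBy (F i) (A i)) :
    (percMeasure p).real (⋂ i ∈ s, A i) = ∏ i ∈ s, (percMeasure p).real (A i) := by
  classical
  induction s using Finset.induction_on with
  | empty => simp
  | insert i s hi ih =>
    rw [Finset.coe_insert, Set.pairwiseDisjoint_insert_of_notMem hi] at hF
    rw [Finset.forall_mem_insert] at hA
    rw [Finset.set_biInter_insert, Finset.prod_insert hi, ← ih hF.1 hA.2]
    exact percMeasure_indep p ((Finset.disjoint_biUnion_right _ _ _).2 hF.2) hA.1 (.biInter hA.2)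

lemma measurePreserving_comp_equiv {κ : Type*} (p : unitInterval) (σ : κ ≃ ι) :
    MeasurePreserving (fun (ω : ι → Bool) (e : κ) ↦ ω (σ e)) (percMeasure p)
      (percMeasure p) where
  measurable := measurable_pi_lambda _ fun _ ↦ measurable_pi_apply _
  map_eq := Measure.map_infinitePi_infinitePi_of_inj σ.injective

/-- The parameter `1/2`. -/
noncomputable def half : unitInterval := ⟨1 / 2, by norm_num, by norm_num⟩

lemma coe_half : (half : ℝ) = 1 / 2 := rfl

lemma symm_half : unitInterval.symm half = half :=
  Subtype.ext (by rw [unitInterval.coe_symm_eq, coe_half]; norm_num)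

lemma bernoulliMeasure_half_map_not :
    (bernoulliMeasure true false half).map not = bernoulliMeasure true false half := by
  rw [map_bernoulliMeasure' _ _ (measurable_of_countable not), Bool.not_true, Bool.not_false,
    bernoulliMeasure_def, bernoulliMeasure_def, add_comm, symm_half]

lemma measurePreserving_not :
    MeasurePreserving (fun (ω : ι → Bool) e ↦ !(ω e)) (percMeasure half)
      (percMeasure half) where
  measurable := measurable_pi_lambda _ fun e ↦
    (measurable_of_countable not).comp (measurable_pi_apply e)
  map_eq := by
    rw [percMeasure, Measure.infinitePi_map_pi _ fun _ ↦ measurable_of_countable not]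
    simp only [bernoulliMeasure_half_map_not]

/-- The product weight of the finite configuration `η`, a polynomial in `p`. -/
def weight (p : ℝ) {α : Type*} [Fintype α] (η : α → Bool) : ℝ :=
  ∏ e, if η e then p else 1 - p

lemma weight_nonneg (p : unitInterval) {α : Type*} [Fintype α] (η : α → Bool) :
    0 ≤ weight p η :=
  Finset.prod_nonneg fun e _ ↦ by
    split_ifs
    exacts [p.2.1, unitInterval.one_minus_nonneg p]

lemma percMeasure_map_restrict_singleton (p : unitInterval) (F : Finset ι) (η : F → Bool) :
    (percMeasure p).map F.restrict {η} = ENNReal.ofReal (weight p η) := by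
  rw [percMeasure, Measure.infinitePi_map_restrict, Measure.pi_singleton, weight,
    ENNReal.ofReal_prod_of_nonneg fun e _ ↦ by
      split_ifs; exacts [p.2.1, unitInterval.one_minus_nonneg p]]
  refine Finset.prod_congr rfl fun e _ ↦ ?_
  rw [← ofReal_measureReal]
  cases η e
  · simp [bernoulliMeasure_real_apply_of_notMem_of_mem p (.singleton false)]
  · simp [bernoulliMeasure_real_apply_of_mem_of_notMem p (.singleton true)]

lemma percMeasure_eq_of_cylinder {p : unitInterval} {μ : Measure (ι → Bool)}
    (h : ∀ (s : Finset ι) (f : ι → Bool),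
      μ {ω | ∀ e ∈ s, ω e = f e} = ENNReal.ofReal (∏ e ∈ s, if f e then (p : ℝ) else 1 - p)) :
    μ = percMeasure p := by
  refine (IsProjectiveLimit.unique (P := fun F : Finset ι ↦ (percMeasure p).map F.restrict)
    (fun F ↦ rfl) fun F ↦ Measure.ext_of_singleton fun η ↦ ?_).symm
  have hcyl : F.restrict ⁻¹' ({η} : Set (F → Bool)) =
      {ω : ι → Bool | ∀ e ∈ F, ω e = extend F η e} := by
    ext ω
    simp only [Set.mem_preimage, Set.mem_singleton_iff, funext_iff, Subtype.forall,
      Set.mem_ofPred_eq, Finset.restrict]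
    exact forall₂_congr fun e he ↦ by rw [extend_coe η ⟨e, he⟩]
  rw [Measure.map_apply (Finset.measurable_restrict F) (.singleton η), hcyl, h,
    percMeasure_map_restrict_singleton, weight, ← Finset.prod_coe_sort]
  simp only [extend_coe]

lemma monotone_indicator_extend {F : Finset ι} {A : Set (ι → Bool)} (hA : IsUpperSet A) :
    Monotone fun η : F → Bool ↦ A.indicator (1 : (ι → Bool) → ℝ) (extend F η) := by
  intro η ζ h
  by_cases hη : extend F η ∈ A
  · simp [hη, hA (extend_mono F h) hη]
  · simp only [Set.indicator_of_notMem hη]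
    exact Set.indicator_nonneg (fun _ _ ↦ zero_le_one) _

section Polynomial

variable [DecidableEq ι] {F G : Finset ι} {A B : Set (ι → Bool)}

/-- The probability of an event determined by `F`, as a polynomial in `p`. -/
noncomputable def localProb (F : Finset ι) (A : Set (ι → Bool)) (p : ℝ) : ℝ :=
  ∑ η : F → Bool, weight p η * A.indicator 1 (extend F η)

lemma DeterminedBy.percMeasure_real (h : DeterminedBy F A) (p : unitInterval) :
    (percMeasure p).real A = localProb F A p := by
  classical
  have _ : IsProbabilityMeasure ((percMeasure p).map F.restrict) :=
    Measure.isProbabilityMeasure_map (Finset.measurable_restrict F).aemeasurable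
  have hfin : {η : F → Bool | extend F η ∈ A} =
      (Finset.univ.filter fun η : F → Bool ↦ extend F η ∈ A) := by simp
  conv_lhs => rw [← h.restrict_preimage]
  rw [← map_measureReal_apply (Finset.measurable_restrict F) (Set.toFinite _).measurableSet, hfin,
    ← sum_measureReal_singleton, localProb, Finset.sum_filter]
  refine Finset.sum_congr rfl fun η _ ↦ ?_
  rw [measureReal_def, percMeasure_map_restrict_singleton,
    ENNReal.toReal_ofReal (weight_nonneg p η), Set.indicator_apply, mul_ite, Pi.one_apply, mul_one,
    mul_zero]

lemma sum_weight (p : unitInterval) : ∑ η : F → Bool, weight p η = 1 := by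
  have huniv : DeterminedBy F (Set.univ : Set (ι → Bool)) := fun _ _ _ ↦ rfl
  simpa [localProb] using (huniv.percMeasure_real p).symm

lemma weight_mul_weight (p : ℝ) {α : Type*} [Fintype α] (η ζ : α → Bool) :
    weight p η * weight p ζ = weight p (η ⊓ ζ) * weight p (η ⊔ ζ) := by
  simp only [weight, ← Finset.prod_mul_distrib, Pi.inf_apply, Pi.sup_apply]
  refine Finset.prod_congr rfl fun e _ ↦ ?_
  rcases le_total (η e) (ζ e) with h | h
  · simp only [min_eq_left h, max_eq_right h]
  · simp only [min_eq_right h, max_eq_left h, mul_comm]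

lemma localProb_mul_le (p : unitInterval) (hA : IsUpperSet A) (hB : IsUpperSet B) :
    localProb F A p * localProb F B p ≤ localProb F (A ∩ B) p := by
  have := fkg (μ := fun η : F → Bool ↦ weight p η)
    (f := fun η ↦ A.indicator 1 (extend F η)) (g := fun η ↦ B.indicator 1 (extend F η))
    (weight_nonneg p)
    (fun η ↦ Set.indicator_nonneg (fun _ _ ↦ zero_le_one) _)
    (fun η ↦ Set.indicator_nonneg (fun _ _ ↦ zero_le_one) _)
    (monotone_indicator_extend hA) (monotone_indicator_extend hB)
    (fun η ζ ↦ (weight_mul_weight _ η ζ).le)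
  simpa only [sum_weight, one_mul, localProb, Set.inter_indicator_one, Pi.mul_apply] using this

omit [DecidableEq ι] in
lemma harris_inequality (p : unitInterval) (dA : DeterminedBy F A) (dB : DeterminedBy G B)
    (hA : IsUpperSet A) (hB : IsUpperSet B) :
    (percMeasure p).real A * (percMeasure p).real B ≤ (percMeasure p).real (A ∩ B) := by
  classical
  rw [(dA.inter_union dB).percMeasure_real, (dA.mono Finset.subset_union_left).percMeasure_real,
    (dB.mono Finset.subset_union_right).percMeasure_real]
  exact localProb_mul_le p hA hB

/-- The event that `e` is pivotal for `A`, irrespective of the state of `e`. -/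
def Pivotal (A : Set (ι → Bool)) (e : ι) : Set (ι → Bool) :=
  {ω | Function.update ω e true ∈ A ∧ Function.update ω e false ∉ A}

lemma DeterminedBy.pivotal (h : DeterminedBy F A) (e : ι) : DeterminedBy F (Pivotal A e) := by
  intro ω ω' hω
  have hup (b : Bool) : Function.update ω e b ∈ A ↔ Function.update ω' e b ∈ A :=
    h.mem_iff fun f hf ↦ by by_cases hfe : f = e <;> simp [hfe, hω f hf]
  simp only [Pivotal, Set.mem_ofPred_eq, hup]

lemma indicator_pivotal (hA : IsUpperSet A) (ω : ι → Bool) (e : ι) :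
    (Pivotal A e).indicator (1 : (ι → Bool) → ℝ) ω =
      A.indicator 1 (Function.update ω e true) - A.indicator 1 (Function.update ω e false) := by
  have hup : Function.update ω e false ∈ A → Function.update ω e true ∈ A :=
    fun h ↦ hA (update_le_update_iff.2 ⟨Bool.false_le _, fun _ _ ↦ le_rfl⟩) h
  by_cases h₁ : Function.update ω e true ∈ A <;> by_cases h₀ : Function.update ω e false ∈ A <;>
    simp_all [Pivotal]

section Weight

variable {α : Type*} [Fintype α] [DecidableEq α]

lemma sum_update_true_add_update_false (e : α) (g : (α → Bool) → ℝ) :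
    ∑ η, (g (Function.update η e true) + g (Function.update η e false)) = 2 * ∑ η, g η := by
  let flip : (α → Bool) → (α → Bool) := fun η ↦ Function.update η e (!(η e))
  have hflip : Function.Involutive flip := fun η ↦ by simp [flip]
  have hpair (η : α → Bool) : g (Function.update η e true) + g (Function.update η e false) =
      g η + g (flip η) := by
    obtain h | h := Bool.eq_false_or_eq_true (η e)
    · rw [← Function.update_eq_self e η]; simp [flip, h]
    · rw [← Function.update_eq_self e η]; simp [flip, h, add_comm]
  rw [Finset.sum_congr rfl fun η _ ↦ hpair η, Finset.sum_add_distrib,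
    show ∑ η, g (flip η) = ∑ η, g η from Equiv.sum_comp hflip.toPerm g, two_mul]

/-- The product weight of `η` with the factor at `e` omitted. -/
def weightErase (p : ℝ) (η : α → Bool) (e : α) : ℝ :=
  ∏ f ∈ Finset.univ.erase e, if η f then p else 1 - p

lemma weightErase_update (p : ℝ) (η : α → Bool) (e : α) (b : Bool) :
    weightErase p (Function.update η e b) e = weightErase p η e :=
  Finset.prod_congr rfl fun f hf ↦ by rw [Function.update_of_ne (Finset.ne_of_mem_erase hf)]

lemma weight_update (p : ℝ) (η : α → Bool) (e : α) (b : Bool) :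
    weight p (Function.update η e b) = (if b then p else 1 - p) * weightErase p η e := by
  rw [weight, ← Finset.mul_prod_erase _ _ (Finset.mem_univ e), Function.update_self,
    ← weightErase_update p η e b, weightErase]

lemma hasDerivAt_weight (p : ℝ) (η : α → Bool) :
    HasDerivAt (fun q ↦ weight q η) (∑ e, weightErase p η e * if η e then 1 else -1) p := by
  have hfactor (e : α) : HasDerivAt (fun q : ℝ ↦ if η e then q else 1 - q)
      (if η e then 1 else -1) p := by
    cases η e
    · simpa using (hasDerivAt_id p).const_sub 1
    · simpa using hasDerivAt_id' p
  exact HasDerivAt.fun_finsetProd fun e _ ↦ hfactor e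

end Weight

/-- Russo's formula. -/
lemma hasDerivAt_localProb (hA : IsUpperSet A) (p : ℝ) :
    HasDerivAt (localProb F A) (∑ e ∈ F, localProb F (Pivotal A e) p) p := by
  have hderiv := HasDerivAt.fun_sum (u := (Finset.univ : Finset (F → Bool))) fun η _ ↦
    (hasDerivAt_weight p η).mul_const (A.indicator (1 : (ι → Bool) → ℝ) (extend F η))
  refine hderiv.congr_deriv ?_
  simp only [Finset.sum_mul]
  rw [Finset.sum_comm, ← Finset.sum_coe_sort F]
  refine Finset.sum_congr rfl fun e _ ↦ mul_left_cancel₀ (two_ne_zero (α := ℝ)) ?_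
  rw [localProb, ← sum_update_true_add_update_false e, ← sum_update_true_add_update_false e]
  refine Finset.sum_congr rfl fun η _ ↦ ?_
  simp only [weightErase_update, weight_update, extend_update, indicator_pivotal hA,
    Function.update_self, Function.update_idem, if_true, Bool.false_eq_true, if_false]
  ring

omit [DecidableEq ι] in
lemma percMeasure_real_mono (dA : DeterminedBy F A) (hA : IsUpperSet A) :
    Monotone fun p : unitInterval ↦ (percMeasure p).real A := by
  classical
  have hmono : MonotoneOn (localProb F A) (Set.Icc 0 1) := by
    refine monotoneOn_of_hasDerivWithinAt_nonneg (convex_Icc 0 1)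
      (fun x _ ↦ (hasDerivAt_localProb hA x).continuousAt.continuousWithinAt)
      (fun x _ ↦ (hasDerivAt_localProb hA x).hasDerivWithinAt) fun x hx ↦ ?_
    rw [interior_Icc] at hx
    refine Finset.sum_nonneg fun e _ ↦ ?_
    rw [← (dA.pivotal e).percMeasure_real ⟨x, Set.Ioo_subset_Icc_self hx⟩]
    exact measureReal_nonneg
  intro p q hpq
  simp only [dA.percMeasure_real]
  exact hmono p.2 q.2 hpq

end Polynomial

end BernoulliProduct

/-! ### Paths in the square lattice -/

section Paths

/-- `b` can be reached from `a` by steps of the relation `r` whose two ends lie in `R`; every point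
is reachable from itself, whether or not it lies in `R`. -/
def ReachIn {α : Type*} (r : α → α → Prop) (R : Set α) : α → α → Prop :=
  Relation.ReflTransGen fun u v ↦ r u v ∧ u ∈ R ∧ v ∈ R

namespace ReachIn

variable {α β : Type*} {r : α → α → Prop} {R R' : Set α} {a b c : α}

lemma refl : ReachIn r R a a := Relation.ReflTransGen.refl

lemma single (h : r a b) (ha : a ∈ R) (hb : b ∈ R) : ReachIn r R a b :=
  Relation.ReflTransGen.single ⟨h, ha, hb⟩

lemma trans (h : ReachIn r R a b) (h' : ReachIn r R b c) : ReachIn r R a c :=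
  Relation.ReflTransGen.trans h h'

lemma symm (hr : ∀ u v, r u v → r v u) (h : ReachIn r R a b) : ReachIn r R b a := by
  induction h with
  | refl => exact refl
  | tail _ h ih => exact (single (hr _ _ h.1) h.2.2 h.2.1).trans ih

lemma map {s : β → β → Prop} {S : Set β} {f : α → β} (hr : ∀ u v, r u v → s (f u) (f v))
    (hR : ∀ u ∈ R, f u ∈ S) (h : ReachIn r R a b) : ReachIn s S (f a) (f b) :=
  Relation.ReflTransGen.lift f (fun _ _ h ↦ ⟨hr _ _ h.1, hR _ h.2.1, hR _ h.2.2⟩) _ _ h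

lemma mono (hR : R ⊆ R') (h : ReachIn r R a b) : ReachIn r R' a b :=
  h.map (f := id) (fun _ _ h ↦ h) hR

lemma mem (h : ReachIn r R a b) (ha : a ∈ R) : b ∈ R := by
  induction h with
  | refl => exact ha
  | tail _ h _ => exact h.2.2

end ReachIn

/-- The vertices of the square lattice. -/
abbrev Site := ℤ × ℤ

/-- The edges of the square lattice: `(v, false)` is the edge from `v` to its right neighbour and
`(v, true)` the edge from `v` to its upper neighbour. -/
abbrev Bond := Site × Bool

/-- Percolation configurations on the bonds of the square lattice. -/
abbrev BondConfig := Bond → Bool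

/-- The right or upper end of a bond. -/
def tip (e : Bond) : Site := if e.2 then (e.1.1, e.1.2 + 1) else (e.1.1 + 1, e.1.2)

/-- The sites `u` and `v` are nearest neighbours. -/
def Nbr (u v : Site) : Prop :=
  (u.1 = v.1 ∧ (v.2 = u.2 + 1 ∨ u.2 = v.2 + 1)) ∨ (u.2 = v.2 ∧ (v.1 = u.1 + 1 ∨ u.1 = v.1 + 1))

/-- The sites `u` and `v` are the two ends of the bond `e`. -/
def Joins (e : Bond) (u v : Site) : Prop := (u = e.1 ∧ v = tip e) ∨ (v = e.1 ∧ u = tip e)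

/-- The sites `u` and `v` are the two ends of an open bond. -/
def OpenStep (ω : BondConfig) (u v : Site) : Prop := ∃ e : Bond, ω e = true ∧ Joins e u v

/-- `b` can be reached from `a` by nearest-neighbour steps in `U`. -/
def PathIn (U : Set Site) : Site → Site → Prop := ReachIn Nbr U

/-- `b` is connected to `a` by open bonds with both ends in `R`. -/
def ConnIn (ω : BondConfig) (R : Set Site) : Site → Site → Prop := ReachIn (OpenStep ω) R

/-- The open cluster of `a` in the region `R`. -/
def clusterIn (ω : BondConfig) (R : Set Site) (a : Site) : Set Site := {v | ConnIn ω R a v}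

lemma Nbr.symm {u v : Site} (h : Nbr u v) : Nbr v u := by unfold Nbr at *; lia

lemma nbr_tip (e : Bond) : Nbr e.1 (tip e) := by
  unfold Nbr tip; split_ifs <;> simp

lemma OpenStep.nbr {ω : BondConfig} {u v : Site} (h : OpenStep ω u v) : Nbr u v := by
  obtain ⟨e, -, ⟨rfl, rfl⟩ | ⟨rfl, rfl⟩⟩ := h
  exacts [nbr_tip e, (nbr_tip e).symm]

lemma OpenStep.symm {ω : BondConfig} {u v : Site} (h : OpenStep ω u v) : OpenStep ω v u :=
  let ⟨e, he, h⟩ := h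
  ⟨e, he, h.symm⟩

variable {ω : BondConfig} {R R₁ R₂ : Set Site} {a b : Site}

lemma ConnIn.symm (h : ConnIn ω R a b) : ConnIn ω R b a :=
  ReachIn.symm (fun _ _ ↦ OpenStep.symm) h

lemma ConnIn.pathIn_clusterIn (h : ConnIn ω R a b) : PathIn (clusterIn ω R a) a b := by
  induction h with
  | refl => exact .refl
  | tail h₁ h₂ ih => exact .tail ih ⟨h₂.1.nbr, h₁, .tail h₁ h₂⟩

lemma clusterIn_subset (ha : a ∈ R) : clusterIn ω R a ⊆ R := fun _ h ↦ h.mem ha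

lemma disjoint_clusterIn (h₁ : R₁ ⊆ R) (h₂ : R₂ ⊆ R) (h : ¬ ConnIn ω R a b) :
    Disjoint (clusterIn ω R₁ a) (clusterIn ω R₂ b) :=
  Set.disjoint_left.2 fun _ h' h'' ↦ h ((h'.mono h₁).trans (ConnIn.symm (h''.mono h₂)))

end Paths

/-! ### Paths crossing each other -/

section Crossing

/-- The indicator of a proposition, modulo `2`. -/
def ind (P : Prop) [Decidable P] : ZMod 2 := if P then 1 else 0

/-- The properties of the function sending `v` to the number, modulo `2`, of crossings of the
leftward horizontal ray from `v + (0, 1/2)` by a path in `U` from `a` to `b`. -/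
structure IsCrossingParity (U : Set Site) (a b : Site) (N : Site → ZMod 2) : Prop where
  add_up : ∀ u ∉ U, (u.1, u.2 + 1) ∉ U → N u + N (u.1, u.2 + 1) =
    ind (a.1 < u.1 ∧ a.2 = u.2 + 1) + ind (b.1 < u.1 ∧ b.2 = u.2 + 1)
  eq_right : ∀ u ∉ U, (u.1 + 1, u.2) ∉ U → N u = N (u.1 + 1, u.2)
  eq_zero : ∀ v, (∀ u ∈ U, v.1 ≤ u.1) → N v = 0
  eq_add : ∀ v ∉ U, (∀ u ∈ U, u.1 ≤ v.1) → N v = ind (a.2 ≤ v.2) + ind (b.2 ≤ v.2)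

namespace IsCrossingParity

variable {U U' : Set Site} {a b c : Site} {N N' : Site → ZMod 2}

lemma refl : IsCrossingParity U a a fun _ ↦ 0 where
  add_up _ _ _ := by rw [CharTwo.add_self_eq_zero, CharTwo.add_self_eq_zero]
  eq_right _ _ _ := rfl
  eq_zero _ _ := rfl
  eq_add _ _ _ := (CharTwo.add_self_eq_zero _).symm

lemma trans (h : IsCrossingParity U a b N) (h' : IsCrossingParity U b c N') :
    IsCrossingParity U a c fun v ↦ N v + N' v where
  add_up u hu hu' := by
    linear_combination h.add_up u hu hu' + h'.add_up u hu hu' +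
      CharTwo.add_self_eq_zero (ind (b.1 < u.1 ∧ b.2 = u.2 + 1))
  eq_right u hu hu' := by rw [h.eq_right u hu hu', h'.eq_right u hu hu']
  eq_zero v hv := by rw [h.eq_zero v hv, h'.eq_zero v hv, add_zero]
  eq_add v hv hv' := by
    linear_combination h.eq_add v hv hv' + h'.eq_add v hv hv' +
      CharTwo.add_self_eq_zero (ind (b.2 ≤ v.2))

lemma mono (h : IsCrossingParity U a b N) (hU : U ⊆ U') : IsCrossingParity U' a b N where
  add_up u hu hu' := h.add_up u (mt (@hU _) hu) (mt (@hU _) hu')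
  eq_right u hu hu' := h.eq_right u (mt (@hU _) hu) (mt (@hU _) hu')
  eq_zero v hv := h.eq_zero v fun u hu ↦ hv u (hU hu)
  eq_add v hv hv' := h.eq_add v (mt (@hU _) hv) fun u hu ↦ hv' u (hU hu)

lemma of_nbr (h : Nbr a b) : IsCrossingParity {a, b} a b fun v ↦
    if a.1 < v.1 then ind (a.2 ≤ v.2) + ind (b.2 ≤ v.2) else 0 := by
  have ne_iff (u v : Site) : u ≠ v ↔ u.1 ≠ v.1 ∨ u.2 ≠ v.2 := by rw [ne_eq, Prod.ext_iff]; tauto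
  unfold Nbr at h
  constructor <;> intro u hu <;>
    simp only [Set.mem_insert_iff, Set.mem_singleton_iff, not_or, ne_iff, forall_eq_or_imp,
      forall_eq] at hu ⊢ <;>
    unfold ind <;> split_ifs <;> first | (intros; rfl) | lia

lemma exists_of_pathIn (h : PathIn U a b) : ∃ N, IsCrossingParity U a b N := by
  induction h with
  | refl => exact ⟨_, refl⟩
  | tail _ h ih =>
    obtain ⟨N, hN⟩ := ih
    exact ⟨_, hN.trans ((of_nbr h.1).mono (Set.pair_subset h.2.1 h.2.2))⟩

end IsCrossingParity

variable {U Z : Set Site} {A B C D : Site}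

lemma IsCrossingParity.eq_of_pathIn {N : Site → ZMod 2} (hN : IsCrossingParity U A B N)
    (hd : Disjoint U Z) (hA : ∀ v ∈ Z, (v.1, v.2 + 1) ∈ Z → A.2 = v.2 + 1 → v.1 ≤ A.1)
    (hB : ∀ v ∈ Z, (v.1, v.2 + 1) ∈ Z → B.2 = v.2 + 1 → v.1 ≤ B.1) (hZ : PathIn Z C D) :
    N C = N D := by
  have hZU : ∀ v ∈ Z, v ∉ U := fun v hv hv' ↦ Set.disjoint_left.1 hd hv' hv
  have up (u) (hu : u ∈ Z) (hu' : (u.1, u.2 + 1) ∈ Z) : N u = N (u.1, u.2 + 1) := by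
    have := hN.add_up u (hZU _ hu) (hZU _ hu')
    rw [ind, ind, if_neg fun h ↦ h.1.not_ge (hA u hu hu' h.2),
      if_neg fun h ↦ h.1.not_ge (hB u hu hu' h.2), add_zero] at this
    exact CharTwo.add_eq_zero.1 this
  have right (u) (hu : u ∈ Z) (hu' : (u.1 + 1, u.2) ∈ Z) : N u = N (u.1 + 1, u.2) :=
    hN.eq_right u (hZU _ hu) (hZU _ hu')
  induction hZ with
  | refl => rfl
  | @tail p q _ h ih =>
    obtain ⟨p₁, p₂⟩ := p
    obtain ⟨q₁, q₂⟩ := q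
    obtain ⟨h, hp, hq⟩ := h
    rw [ih]
    simp only [Nbr] at h
    rcases h with ⟨rfl, rfl | rfl⟩ | ⟨rfl, rfl | rfl⟩
    exacts [up _ hp hq, (up _ hq hp).symm, right _ hp hq, (right _ hq hp).symm]

lemma not_disjoint_of_crossing_aux (hU : PathIn U A B) (hZ : PathIn Z C D) (hC : C ∈ Z)
    (hUCD : ∀ v ∈ U, C.1 ≤ v.1 ∧ v.1 ≤ D.1) (hAD : A.2 ≤ D.2) (hDB : D.2 < B.2)
    (hA : ∀ v ∈ Z, (v.1, v.2 + 1) ∈ Z → A.2 = v.2 + 1 → v.1 ≤ A.1)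
    (hB : ∀ v ∈ Z, (v.1, v.2 + 1) ∈ Z → B.2 = v.2 + 1 → v.1 ≤ B.1) : ¬ Disjoint U Z := by
  intro hd
  obtain ⟨N, hN⟩ := IsCrossingParity.exists_of_pathIn hU
  have hCD := hN.eq_of_pathIn hd hA hB hZ
  rw [hN.eq_zero C fun u hu ↦ (hUCD u hu).1,
    hN.eq_add D (Set.disjoint_right.1 hd (hZ.mem hC)) fun u hu ↦ (hUCD u hu).2, ind, ind,
    if_pos hAD, if_neg hDB.not_ge] at hCD
  exact absurd hCD (by decide)

lemma not_disjoint_of_crossing (hU : PathIn U A B) (hZ : PathIn Z C D) (hB : B ∈ U) (hC : C ∈ Z)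
    (hUCD : ∀ v ∈ U, C.1 ≤ v.1 ∧ v.1 ≤ D.1) (hZAB : ∀ v ∈ Z, A.2 ≤ v.2 ∧ v.2 ≤ B.2) :
    ¬ Disjoint U Z := by
  intro hd
  have hU' : PathIn (insert (B.1, B.2 + 1) U) A (B.1, B.2 + 1) :=
    (hU.mono (Set.subset_insert _ _)).trans
      (.single (Or.inl ⟨rfl, Or.inl rfl⟩) (Set.mem_insert_of_mem _ hB) (Set.mem_insert _ _))
  have hD := hZAB D (hZ.mem hC)
  refine not_disjoint_of_crossing_aux hU' hZ hC ?_ hD.1 (Int.lt_add_one_of_le hD.2) ?_ ?_ ?_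
  · simpa only [Set.mem_insert_iff, forall_eq_or_imp] using ⟨hUCD B hB, hUCD⟩
  · exact fun v hv _ h ↦ absurd (hZAB v hv).1 (by lia)
  · exact fun v _ hv h ↦ absurd (hZAB _ hv).2 (by simp only at h ⊢; lia)
  · exact Set.disjoint_insert_left.2 ⟨fun h ↦ absurd (hZAB _ h).2 (by simp), hd⟩

lemma not_disjoint_of_interlaced (hU : PathIn U A B) (hZ : PathIn Z C D) (hA : A ∈ U) (hC : C ∈ Z)
    (hAD : A.1 = D.1) (hBD : B.1 = D.1) (hUCD : ∀ v ∈ U, C.1 ≤ v.1 ∧ v.1 ≤ D.1)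
    (hZD : ∀ v ∈ Z, v.1 ≤ D.1) (hAD' : A.2 ≤ D.2) (hDB' : D.2 ≤ B.2) : ¬ Disjoint U Z := by
  intro hd
  have hDB : D.2 ≠ B.2 := fun h ↦
    Set.disjoint_left.1 hd (hU.mem hA) (Prod.ext hBD h.symm ▸ hZ.mem hC)
  exact not_disjoint_of_crossing_aux hU hZ hC hUCD hAD' (lt_of_le_of_ne hDB' hDB)
    (fun v hv _ _ ↦ hAD ▸ hZD v hv) (fun v hv _ _ ↦ hBD ▸ hZD v hv) hd

lemma not_disjoint_of_interlaced' (hU : PathIn U A B) (hZ : PathIn Z C D) (hA : A ∈ U) (hC : C ∈ Z)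
    (hAD : A.1 = D.1) (hBD : B.1 = D.1) (hUCD : ∀ v ∈ U, D.1 ≤ v.1 ∧ v.1 ≤ C.1)
    (hZD : ∀ v ∈ Z, D.1 ≤ v.1) (hAD' : A.2 ≤ D.2) (hDB' : D.2 ≤ B.2) : ¬ Disjoint U Z := by
  let τ (v : Site) : Site := (-v.1, v.2)
  have hτ (v) : τ (τ v) = v := by simp only [τ, neg_neg]
  have hnbr (u v) (h : Nbr u v) : Nbr (τ u) (τ v) := by simp only [Nbr, τ] at *; lia
  have hmem (W : Set Site) (v) (hv : v ∈ W) : τ v ∈ τ ⁻¹' W := by rwa [Set.mem_preimage, hτ]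
  intro hd
  refine not_disjoint_of_interlaced (hU.map hnbr (hmem U)) (hZ.map hnbr (hmem Z)) (hmem U A hA)
    (hmem Z C hC) (congrArg Neg.neg hAD) (congrArg Neg.neg hBD) (fun v hv ↦ ?_) (fun v hv ↦ ?_)
    hAD' hDB' (hd.preimage τ)
  · have := hUCD _ hv; simp only [τ] at *; lia
  · have := hZD _ hv; simp only [τ] at *; lia

variable {ω : BondConfig} {R R₁ R₂ : Set Site}

lemma ConnIn.of_crossing (hAB : ConnIn ω R₁ A B) (hCD : ConnIn ω R₂ C D) (hR₁ : R₁ ⊆ R)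
    (hR₂ : R₂ ⊆ R) (hA : A ∈ R₁) (hC : C ∈ R₂) (h₁ : ∀ v ∈ R₁, C.1 ≤ v.1 ∧ v.1 ≤ D.1)
    (h₂ : ∀ v ∈ R₂, A.2 ≤ v.2 ∧ v.2 ≤ B.2) : ConnIn ω R A C := by
  by_contra h
  exact not_disjoint_of_crossing hAB.pathIn_clusterIn hCD.pathIn_clusterIn hAB .refl
    (fun v hv ↦ h₁ v (clusterIn_subset hA hv)) (fun v hv ↦ h₂ v (clusterIn_subset hC hv))
    (disjoint_clusterIn hR₁ hR₂ h)

lemma ConnIn.of_interlaced (hAB : ConnIn ω R₁ A B) (hCD : ConnIn ω R₂ C D) (hR₁ : R₁ ⊆ R)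
    (hR₂ : R₂ ⊆ R) (hA : A ∈ R₁) (hC : C ∈ R₂) (hAD : A.1 = D.1) (hBD : B.1 = D.1)
    (h₁ : ∀ v ∈ R₁, C.1 ≤ v.1 ∧ v.1 ≤ D.1) (h₂ : ∀ v ∈ R₂, v.1 ≤ D.1) (hAD' : A.2 ≤ D.2)
    (hDB' : D.2 ≤ B.2) : ConnIn ω R A C := by
  by_contra h
  exact not_disjoint_of_interlaced hAB.pathIn_clusterIn hCD.pathIn_clusterIn .refl .refl hAD hBD
    (fun v hv ↦ h₁ v (clusterIn_subset hA hv)) (fun v hv ↦ h₂ v (clusterIn_subset hC hv)) hAD'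
    hDB' (disjoint_clusterIn hR₁ hR₂ h)

lemma ConnIn.of_interlaced' (hAB : ConnIn ω R₁ A B) (hCD : ConnIn ω R₂ C D) (hR₁ : R₁ ⊆ R)
    (hR₂ : R₂ ⊆ R) (hA : A ∈ R₁) (hC : C ∈ R₂) (hAD : A.1 = D.1) (hBD : B.1 = D.1)
    (h₁ : ∀ v ∈ R₁, D.1 ≤ v.1 ∧ v.1 ≤ C.1) (h₂ : ∀ v ∈ R₂, D.1 ≤ v.1) (hAD' : A.2 ≤ D.2)
    (hDB' : D.2 ≤ B.2) : ConnIn ω R A C := by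
  by_contra h
  exact not_disjoint_of_interlaced' hAB.pathIn_clusterIn hCD.pathIn_clusterIn .refl .refl hAD hBD
    (fun v hv ↦ h₁ v (clusterIn_subset hA hv)) (fun v hv ↦ h₂ v (clusterIn_subset hC hv)) hAD'
    hDB' (disjoint_clusterIn hR₁ hR₂ h)

end Crossing

/-! ### Rectangles and annuli -/

section Rectangles

/-- The rectangle `[a, b] × [c, d]`. -/
def rect (a b c d : ℤ) : Set Site := {v | a ≤ v.1 ∧ v.1 ≤ b ∧ c ≤ v.2 ∧ v.2 ≤ d}

lemma mem_rect {a b c d : ℤ} {v : Site} :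
    v ∈ rect a b c d ↔ a ≤ v.1 ∧ v.1 ≤ b ∧ c ≤ v.2 ∧ v.2 ≤ d :=
  Iff.rfl

lemma rect_subset_rect {a b c d a' b' c' d' : ℤ} (ha : a' ≤ a) (hb : b ≤ b') (hc : c' ≤ c)
    (hd : d ≤ d') : rect a b c d ⊆ rect a' b' c' d' :=
  fun _ ⟨h₁, h₂, h₃, h₄⟩ ↦ ⟨ha.trans h₁, h₂.trans hb, hc.trans h₃, h₄.trans hd⟩

lemma finite_rect (a b c d : ℤ) : (rect a b c d).Finite :=
  ((Set.finite_Icc a b).prod (Set.finite_Icc c d)).subset fun _ ⟨h₁, h₂, h₃, h₄⟩ ↦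
    ⟨⟨h₁, h₂⟩, h₃, h₄⟩

/-- In `ω`, the rectangle `[a, b] × [c, d]` is crossed from the site `u` of its left side to the
site `v` of its right side. -/
structure IsHorizCrossing (ω : BondConfig) (a b c d : ℤ) (u v : Site) : Prop where
  left_mem : u ∈ rect a b c d
  left_eq : u.1 = a
  right_eq : v.1 = b
  connIn : ConnIn ω (rect a b c d) u v

/-- In `ω`, the rectangle `[a, b] × [c, d]` is crossed from the site `u` of its bottom side to the
site `v` of its top side. -/
structure IsVertCrossing (ω : BondConfig) (a b c d : ℤ) (u v : Site) : Prop where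
  bot_mem : u ∈ rect a b c d
  bot_eq : u.2 = c
  top_eq : v.2 = d
  connIn : ConnIn ω (rect a b c d) u v

lemma IsHorizCrossing.connIn_isVertCrossing {ω : BondConfig} {a b c d a' b' c' d' : ℤ}
    {u v u' v' : Site} {R : Set Site} (h : IsHorizCrossing ω a b c d u v)
    (h' : IsVertCrossing ω a' b' c' d' u' v') (ha : a ≤ a') (hb : b' ≤ b) (hc : c' ≤ c)
    (hd : d ≤ d') (hR : rect a b c d ⊆ R) (hR' : rect a' b' c' d' ⊆ R) : ConnIn ω R u u' :=
  ConnIn.symm <| h'.connIn.of_crossing h.connIn hR' hR h'.bot_mem h.left_mem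
    (fun _ hv ↦ ⟨h.left_eq ▸ ha.trans hv.1, h.right_eq ▸ hv.2.1.trans hb⟩)
    fun _ hv ↦ ⟨h'.bot_eq ▸ hc.trans hv.2.2.1, h'.top_eq ▸ hv.2.2.2.trans hd⟩

/-- The function `f` increases by at most one along each nearest-neighbour step. -/
def IsStepLipschitz (f : Site → ℤ) : Prop := ∀ u v, Nbr u v → f v ≤ f u + 1

variable {ω : BondConfig} {R : Set Site} {a b : Site} {s t : ℤ} {f : Site → ℤ}

lemma ConnIn.exists_last (h : ConnIn ω R a b) (hf : IsStepLipschitz f) (ha : a ∈ R)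
    (has : f a ≤ s) (hsb : s ≤ f b) : ∃ c ∈ R, f c = s ∧ ConnIn ω {v ∈ R | s ≤ f v} c b := by
  induction h with
  | refl => exact ⟨a, ha, le_antisymm has hsb, .refl⟩
  | @tail p q _ h ih =>
    obtain hp | hp := le_or_gt s (f p)
    · obtain ⟨c, hc, hcs, hcp⟩ := ih hp
      exact ⟨c, hc, hcs, hcp.tail ⟨h.1, ⟨h.2.1, hp⟩, h.2.2, hsb⟩⟩
    · exact ⟨q, h.2.2, le_antisymm ((hf _ _ h.1.nbr).trans hp) hsb, .refl⟩

lemma ConnIn.exists_first (h : ConnIn ω R a b) (hf : IsStepLipschitz f) (ha : a ∈ R)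
    (hat : f a ≤ t) (htb : t ≤ f b) : ∃ c ∈ R, f c = t ∧ ConnIn ω {v ∈ R | f v ≤ t} a c := by
  have hf' : IsStepLipschitz fun v ↦ -f v := fun u v h ↦ by have := hf v u h.symm; lia
  obtain ⟨c, hc, hct, hca⟩ := h.symm.exists_last hf' (h.mem ha) (neg_le_neg htb) (neg_le_neg hat)
  refine ⟨c, hc, neg_injective hct, hca.symm.mono fun v hv ↦ ⟨hv.1, neg_le_neg_iff.1 hv.2⟩⟩

lemma isStepLipschitz_fst : IsStepLipschitz Prod.fst := fun _ _ h ↦ by unfold Nbr at h; lia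

lemma isStepLipschitz_snd : IsStepLipschitz Prod.snd := fun _ _ h ↦ by unfold Nbr at h; lia

lemma isStepLipschitz_neg_fst : IsStepLipschitz fun v ↦ -v.1 :=
  fun _ _ h ↦ by unfold Nbr at h; lia

lemma isStepLipschitz_neg_snd : IsStepLipschitz fun v ↦ -v.2 :=
  fun _ _ h ↦ by unfold Nbr at h; lia

/-- The sup norm of a site. -/
def supNorm (v : Site) : ℤ := max (max v.1 (-v.1)) (max v.2 (-v.2))

lemma isStepLipschitz_supNorm : IsStepLipschitz supNorm := fun _ _ h ↦ by
  unfold Nbr at h; unfold supNorm; omega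

/-- The square `[-n, n]²`. -/
def square (n : ℤ) : Set Site := {v | supNorm v ≤ n}

lemma square_eq_rect (n : ℤ) : square n = rect (-n) n (-n) n := by
  ext v; simp only [square, supNorm, Set.mem_ofPred_eq, mem_rect]; omega

lemma finite_square (n : ℤ) : (square n).Finite := square_eq_rect n ▸ finite_rect _ _ _ _

lemma ConnIn.exists_last_in_square {S : Set Site} (h : ConnIn ω (R ∩ square t) a b)
    (hf : IsStepLipschitz f) (ha : a ∈ R ∩ square t) (has : f a ≤ s) (hsb : s ≤ f b)
    (hS : ∀ v ∈ rect (-t) t (-t) t, s ≤ f v → v ∈ S) :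
    ∃ c ∈ S, b ∈ S ∧ f c = s ∧ ConnIn ω R a c ∧ ConnIn ω S c b := by
  rw [← square_eq_rect] at hS
  obtain ⟨c, hc, hcs, hcb⟩ := h.exists_last hf ha has hsb
  have hcb' : ConnIn ω S c b := hcb.mono fun v hv ↦ hS v hv.1.2 hv.2
  have hcS : c ∈ S := hS c hc.2 hcs.ge
  exact ⟨c, hcS, hcb'.mem hcS, hcs, (h.mono Set.inter_subset_left).trans
    (ConnIn.symm (hcb.mono fun _ hv ↦ hv.1.1)), hcb'⟩

lemma ConnIn.exists_annulus_crossing (h : ConnIn ω R a b) (ha : a ∈ R) (hst : s ≤ t)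
    (has : supNorm a ≤ s) (htb : t ≤ supNorm b) :
    ∃ c d, ConnIn ω R a c ∧ ConnIn ω R a d ∧
      (IsHorizCrossing ω s t (-t) t c d ∨ IsHorizCrossing ω (-t) (-s) (-t) t c d ∨
        IsVertCrossing ω (-t) t s t c d ∨ IsVertCrossing ω (-t) t (-t) (-s) c d) := by
  obtain ⟨d, -, hdt, had⟩ := h.exists_first isStepLipschitz_supNorm ha (has.trans hst) htb
  have had' : ConnIn ω R a d := had.mono fun _ hv ↦ hv.1
  have last (f : Site → ℤ) (hf : IsStepLipschitz f) (hfa : f a ≤ s) (hfd : f d = t)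
      (S : Set Site) := ConnIn.exists_last_in_square (S := S) had hf
    ⟨ha, has.trans hst⟩ hfa (hst.trans hfd.ge)
  have hd : d.1 = t ∨ -d.1 = t ∨ d.2 = t ∨ -d.2 = t := by unfold supNorm at hdt; omega
  have ha' : a.1 ≤ s ∧ -a.1 ≤ s ∧ a.2 ≤ s ∧ -a.2 ≤ s := by unfold supNorm at has; omega
  obtain hd | hd | hd | hd := hd
  · obtain ⟨c, hc, -, hcs, hac, hcd⟩ := last _ isStepLipschitz_fst ha'.1 hd (rect s t (-t) t)
      fun v ⟨_, h₂, h₃, h₄⟩ h ↦ ⟨h, h₂, h₃, h₄⟩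
    exact ⟨c, d, hac, had', .inl ⟨hc, hcs, hd, hcd⟩⟩
  · obtain ⟨c, -, hd', hcs, hac, hcd⟩ := last _ isStepLipschitz_neg_fst ha'.2.1 hd
      (rect (-t) (-s) (-t) t) fun v ⟨h₁, _, h₃, h₄⟩ h ↦ ⟨h₁, le_neg_of_le_neg h, h₃, h₄⟩
    exact ⟨d, c, had', hac, .inr <| .inl
      ⟨hd', neg_eq_iff_eq_neg.1 hd, neg_eq_iff_eq_neg.1 hcs, hcd.symm⟩⟩
  · obtain ⟨c, hc, -, hcs, hac, hcd⟩ := last _ isStepLipschitz_snd ha'.2.2.1 hd (rect (-t) t s t)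
      fun v ⟨h₁, h₂, _, h₄⟩ h ↦ ⟨h₁, h₂, h, h₄⟩
    exact ⟨c, d, hac, had', .inr <| .inr <| .inl ⟨hc, hcs, hd, hcd⟩⟩
  · obtain ⟨c, -, hd', hcs, hac, hcd⟩ := last _ isStepLipschitz_neg_snd ha'.2.2.2 hd
      (rect (-t) t (-t) (-s)) fun v ⟨h₁, h₂, h₃, _⟩ h ↦ ⟨h₁, h₂, h₃, le_neg_of_le_neg h⟩
    exact ⟨d, c, had', hac, .inr <| .inr <| .inr
      ⟨hd', neg_eq_iff_eq_neg.1 hd, neg_eq_iff_eq_neg.1 hcs, hcd.symm⟩⟩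

end Rectangles

/-! ### Connection events -/

section ConnectionEvents

/-- An increasing event which is determined by the states of finitely many coordinates. -/
structure IsIncreasingLocal {ι : Type*} (A : Set (ι → Bool)) : Prop where
  isUpperSet : IsUpperSet A
  exists_determinedBy : ∃ F, DeterminedBy F A

namespace IsIncreasingLocal

variable {ι : Type*} {A B : Set (ι → Bool)} {p : unitInterval} {a b : ℝ}

lemma measurableSet (hA : IsIncreasingLocal A) : MeasurableSet A :=
  let ⟨_, hF⟩ := hA.exists_determinedBy
  hF.measurableSet

lemma inter (hA : IsIncreasingLocal A) (hB : IsIncreasingLocal B) :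
    IsIncreasingLocal (A ∩ B) where
  isUpperSet := hA.isUpperSet.inter hB.isUpperSet
  exists_determinedBy := by
    classical
    obtain ⟨F, hF⟩ := hA.exists_determinedBy
    obtain ⟨G, hG⟩ := hB.exists_determinedBy
    exact ⟨F ∪ G, hF.inter_union hG⟩

lemma mul_le_inter (hA : IsIncreasingLocal A) (hB : IsIncreasingLocal B) (hb : 0 ≤ b)
    (haA : a ≤ (percMeasure p).real A) (hbB : b ≤ (percMeasure p).real B) :
    a * b ≤ (percMeasure p).real (A ∩ B) := by
  classical
  obtain ⟨F, hF⟩ := hA.exists_determinedBy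
  obtain ⟨G, hG⟩ := hB.exists_determinedBy
  exact (mul_le_mul haA hbB hb measureReal_nonneg).trans <|
    harris_inequality p hF hG hA.isUpperSet hB.isUpperSet

end IsIncreasingLocal

variable {ω ω' : BondConfig} {R R' A A' B B' : Set Site} {a b : Site}

/-- The event that a site of `A ∩ R` is connected to a site of `B ∩ R` inside `R`. -/
def connEvent (R A B : Set Site) : Set BondConfig :=
  {ω | ∃ a ∈ R, ∃ b ∈ R, a ∈ A ∧ b ∈ B ∧ ConnIn ω R a b}

/-- The bonds whose left or lower end lies in the finite region `R`; they include all bonds with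
both ends in `R`. -/
noncomputable def bondsOf (hR : R.Finite) : Finset Bond := hR.toFinset ×ˢ Finset.univ

lemma mem_bondsOf {hR : R.Finite} {e : Bond} : e ∈ bondsOf hR ↔ e.1 ∈ R := by
  simp only [bondsOf, Finset.mem_product, Set.Finite.mem_toFinset, Finset.mem_univ, and_true]

lemma ConnIn.of_imp (hω : ∀ e : Bond, e.1 ∈ R → tip e ∈ R → ω e = true → ω' e = true)
    (h : ConnIn ω R a b) : ConnIn ω' R a b := by
  refine Relation.ReflTransGen.mono ?_ _ _ h
  rintro _ _ ⟨⟨e, he, ⟨rfl, rfl⟩ | ⟨rfl, rfl⟩⟩, h₁, h₂⟩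
  exacts [⟨⟨e, hω e h₁ h₂ he, .inl ⟨rfl, rfl⟩⟩, h₁, h₂⟩,
    ⟨⟨e, hω e h₂ h₁ he, .inr ⟨rfl, rfl⟩⟩, h₁, h₂⟩]

lemma isUpperSet_connEvent (R A B : Set Site) : IsUpperSet (connEvent R A B) :=
  fun _ _ hω ⟨a, ha, b, hb, haA, hbB, h⟩ ↦
    ⟨a, ha, b, hb, haA, hbB, h.of_imp fun e _ _ ↦ Bool.le_iff_imp.1 (hω e)⟩

lemma determinedBy_connEvent_of_forall {F : Finset Bond}
    (hF : ∀ e : Bond, e.1 ∈ R → tip e ∈ R → e ∈ F) (A B : Set Site) :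
    DeterminedBy F (connEvent R A B) :=
  .of_imp fun _ _ hω ⟨a, ha, b, hb, haA, hbB, h⟩ ↦
    ⟨a, ha, b, hb, haA, hbB, h.of_imp fun e h₁ h₂ ↦ (hω e (hF e h₁ h₂) ▸ ·)⟩

lemma determinedBy_connEvent (hR : R.Finite) (A B : Set Site) :
    DeterminedBy (bondsOf hR) (connEvent R A B) :=
  determinedBy_connEvent_of_forall (fun _ he _ ↦ mem_bondsOf.2 he) A B

lemma isIncreasingLocal_connEvent (hR : R.Finite) (A B : Set Site) :
    IsIncreasingLocal (connEvent R A B) :=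
  ⟨isUpperSet_connEvent R A B, _, determinedBy_connEvent hR A B⟩

lemma connEvent_subset (hR : R ⊆ R') (hA : ∀ v ∈ R, v ∈ A → v ∈ A')
    (hB : ∀ v ∈ R, v ∈ B → v ∈ B') : connEvent R A B ⊆ connEvent R' A' B' :=
  fun _ ⟨a, ha, b, hb, haA, hbB, h⟩ ↦
    ⟨a, hR ha, b, hR hb, hA a ha haA, hB b hb hbB, h.mono hR⟩

lemma connEvent_comm (R A B : Set Site) : connEvent R A B = connEvent R B A :=
  Set.ext fun _ ↦ ⟨fun ⟨a, ha, b, hb, haA, hbB, h⟩ ↦ ⟨b, hb, a, ha, hbB, haA, h.symm⟩,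
    fun ⟨a, ha, b, hb, haA, hbB, h⟩ ↦ ⟨b, hb, a, ha, hbB, haA, h.symm⟩⟩

/-- The event that the rectangle `[a, b] × [c, d]` is crossed from left to right. -/
def horizCross (a b c d : ℤ) : Set BondConfig :=
  connEvent (rect a b c d) {v | v.1 = a} {v | v.1 = b}

/-- The event that the rectangle `[a, b] × [c, d]` is crossed from bottom to top. -/
def vertCross (a b c d : ℤ) : Set BondConfig :=
  connEvent (rect a b c d) {v | v.2 = c} {v | v.2 = d}

lemma mem_horizCross {a b c d : ℤ} :
    ω ∈ horizCross a b c d ↔ ∃ u v, IsHorizCrossing ω a b c d u v :=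
  ⟨fun ⟨u, hu, v, _, hua, hvb, h⟩ ↦ ⟨u, v, hu, hua, hvb, h⟩,
    fun ⟨u, v, hu, hua, hvb, h⟩ ↦ ⟨u, hu, v, h.mem hu, hua, hvb, h⟩⟩

lemma mem_vertCross {a b c d : ℤ} :
    ω ∈ vertCross a b c d ↔ ∃ u v, IsVertCrossing ω a b c d u v :=
  ⟨fun ⟨u, hu, v, _, huc, hvd, h⟩ ↦ ⟨u, v, hu, huc, hvd, h⟩,
    fun ⟨u, v, hu, huc, hvd, h⟩ ↦ ⟨u, hu, v, h.mem hu, huc, hvd, h⟩⟩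

lemma isIncreasingLocal_horizCross (a b c d : ℤ) : IsIncreasingLocal (horizCross a b c d) :=
  isIncreasingLocal_connEvent (finite_rect a b c d) _ _

lemma isIncreasingLocal_vertCross (a b c d : ℤ) : IsIncreasingLocal (vertCross a b c d) :=
  isIncreasingLocal_connEvent (finite_rect a b c d) _ _

end ConnectionEvents

/-! ### Symmetries of the lattice -/

section Symmetry

/-- The map `τ` on sites is induced by a permutation of the bonds. -/
def IsLatticeAut (τ : Site → Site) : Prop :=
  ∃ σ : Bond ≃ Bond, ∀ e, s(τ e.1, τ (tip e)) = s((σ e).1, tip (σ e))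

lemma IsLatticeAut.comp {τ ρ : Site → Site} (hτ : IsLatticeAut τ) (hρ : IsLatticeAut ρ) :
    IsLatticeAut (τ ∘ ρ) := by
  obtain ⟨σ, hσ⟩ := hτ
  obtain ⟨π, hπ⟩ := hρ
  exact ⟨π.trans σ, fun e ↦ (congrArg (Sym2.map τ) (hπ e)).trans (hσ (π e))⟩

lemma isLatticeAut_add (a : Site) : IsLatticeAut (· + a) := by
  refine ⟨(Equiv.addRight a).prodCongr (Equiv.refl Bool), ?_⟩
  obtain ⟨a₁, a₂⟩ := a
  rintro ⟨⟨x, y⟩, _ | _⟩ <;> simp [tip, add_right_comm]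

lemma isLatticeAut_swap : IsLatticeAut Prod.swap := by
  refine ⟨(Equiv.prodComm ℤ ℤ).prodCongr (Equiv.boolNot), ?_⟩
  rintro ⟨⟨x, y⟩, _ | _⟩ <;> simp [tip]

lemma isLatticeAut_sub_fst (c : ℤ) : IsLatticeAut fun v ↦ (c - v.1, v.2) := by
  let f (e : Bond) : Bond :=
    if e.2 then ((c - e.1.1, e.1.2), true) else ((c - e.1.1 - 1, e.1.2), false)
  have hf : Function.Involutive f := by rintro ⟨⟨x, y⟩, _ | _⟩ <;> simp [f]; lia
  refine ⟨⟨f, f, hf, hf⟩, fun e ↦ ?_⟩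
  change _ = s((f e).1, tip (f e))
  obtain ⟨⟨x, y⟩, _ | _⟩ := e <;> simp [f, tip, ← sub_sub]

lemma isLatticeAut_sub_snd (c : ℤ) : IsLatticeAut fun v ↦ (v.1, c - v.2) :=
  isLatticeAut_swap.comp ((isLatticeAut_sub_fst c).comp isLatticeAut_swap)

lemma OpenStep.map {τ : Site → Site} {σ : Bond ≃ Bond}
    (hσ : ∀ e, s(τ e.1, τ (tip e)) = s((σ e).1, tip (σ e))) {ω : BondConfig} {u v : Site}
    (h : OpenStep (fun e ↦ ω (σ e)) u v) : OpenStep ω (τ u) (τ v) := by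
  obtain ⟨e, he, h⟩ := h
  refine ⟨σ e, he, ?_⟩
  rcases h with ⟨rfl, rfl⟩ | ⟨rfl, rfl⟩ <;> rcases Sym2.eq_iff.1 (hσ e) with h | h <;>
    simp [Joins, h]

lemma IsLatticeAut.percMeasure_real_connEvent_le {τ : Site → Site} (hτ : IsLatticeAut τ)
    (p : unitInterval) {R R' A A' B B' : Set Site} (hRfin : R.Finite) (hR : ∀ v ∈ R, τ v ∈ R')
    (hA : ∀ v ∈ R, v ∈ A → τ v ∈ A') (hB : ∀ v ∈ R, v ∈ B → τ v ∈ B') :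
    (percMeasure p).real (connEvent R A B) ≤ (percMeasure p).real (connEvent R' A' B') := by
  obtain ⟨σ, hσ⟩ := hτ
  rw [← (measurePreserving_comp_equiv p σ).measureReal_preimage
    (determinedBy_connEvent hRfin A B).measurableSet.nullMeasurableSet]
  refine measureReal_mono ?_
  rintro ω ⟨a, ha, b, hb, haA, hbB, h⟩
  exact ⟨τ a, hR a ha, τ b, hR b hb, hA a ha haA, hB b hb hbB,
    h.map (fun _ _ ↦ OpenStep.map hσ) hR⟩

end Symmetry

/-! ### Planar duality -/

section Duality

/-- The bond crossed by a bond of the dual lattice, where the dual site `(x, y)` stands for the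
face with lower left corner `(x, y)`. -/
def crossedBond : Bond ≃ Bond where
  toFun e := if e.2 then ((e.1.1, e.1.2 + 1), false) else ((e.1.1 + 1, e.1.2), true)
  invFun e := if e.2 then ((e.1.1 - 1, e.1.2), false) else ((e.1.1, e.1.2 - 1), true)
  left_inv := by rintro ⟨⟨x, y⟩, _ | _⟩ <;> simp
  right_inv := by rintro ⟨⟨x, y⟩, _ | _⟩ <;> simp

/-- The dual configuration: a dual bond is open when the bond it crosses is closed. -/
def dualConfig (ω : BondConfig) : BondConfig := fun e ↦ !(ω (crossedBond e))

lemma measurePreserving_dualConfig :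
    MeasurePreserving dualConfig (percMeasure half) (percMeasure half) :=
  measurePreserving_not.comp (measurePreserving_comp_equiv half crossedBond)

/-- The site `v` in the lattice refined by a factor two, in which the bonds get midpoints. -/
def double (v : Site) : Site := (2 * v.1, 2 * v.2)

/-- The midpoint of a bond in the lattice refined by a factor two. -/
def midpoint (e : Bond) : Site :=
  if e.2 then (2 * e.1.1, 2 * e.1.2 + 1) else (2 * e.1.1 + 1, 2 * e.1.2)

/-- The position of a site of the refined dual lattice in the refined lattice. -/
def shiftDual (v : Site) : Site := (v.1 + 1, v.2 + 1)

/-- The sites of `R` and the open bonds of `R`, drawn in the lattice refined by a factor two. -/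
def openDrawing (ω : BondConfig) (R : Set Site) : Set Site :=
  {w | (∃ v ∈ R, w = double v) ∨ ∃ e, ω e = true ∧ e.1 ∈ R ∧ tip e ∈ R ∧ w = midpoint e}

variable {ω : BondConfig} {R : Set Site} {a b : Site}

lemma double_mem_openDrawing (ω : BondConfig) (ha : a ∈ R) : double a ∈ openDrawing ω R :=
  .inl ⟨a, ha, rfl⟩

lemma openDrawing_subset_rect {a b c d : ℤ} :
    openDrawing ω (rect a b c d) ⊆ rect (2 * a) (2 * b) (2 * c) (2 * d) := by
  rintro w (⟨v, hv, rfl⟩ | ⟨e, -, h₁, h₂, rfl⟩)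
  · simp only [double, mem_rect] at hv ⊢
    lia
  · obtain ⟨⟨x, y⟩, _ | _⟩ := e <;> simp [midpoint, tip, mem_rect] at h₁ h₂ ⊢ <;> lia

lemma pathIn_openDrawing_of_bond {e : Bond} (he : ω e = true) (h₁ : e.1 ∈ R) (h₂ : tip e ∈ R) :
    PathIn (openDrawing ω R) (double e.1) (double (tip e)) := by
  have hmid : midpoint e ∈ openDrawing ω R := .inr ⟨e, he, h₁, h₂, rfl⟩
  refine (ReachIn.single ?_ (double_mem_openDrawing ω h₁) hmid).trans
    (ReachIn.single ?_ hmid (double_mem_openDrawing ω h₂))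
  all_goals
    simp only [Nbr, midpoint, double, tip]
    split_ifs <;> lia

lemma ConnIn.pathIn_openDrawing (h : ConnIn ω R a b) :
    PathIn (openDrawing ω R) (double a) (double b) := by
  induction h with
  | refl => exact .refl
  | tail _ h ih =>
    obtain ⟨⟨e, he, ⟨rfl, rfl⟩ | ⟨rfl, rfl⟩⟩, h₁, h₂⟩ := h
    exacts [ih.trans (pathIn_openDrawing_of_bond he h₁ h₂),
      ih.trans (ReachIn.symm (fun _ _ ↦ Nbr.symm) (pathIn_openDrawing_of_bond he h₂ h₁))]

lemma ConnIn.pathIn_shiftDual (h : ConnIn ω R a b) :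
    PathIn (shiftDual '' openDrawing ω R) (shiftDual (double a)) (shiftDual (double b)) :=
  h.pathIn_openDrawing.map (fun u v h ↦ by unfold Nbr at *; simp only [shiftDual]; lia)
    fun _ ↦ Set.mem_image_of_mem shiftDual

lemma disjoint_openDrawing_dual (ω : BondConfig) (R R' : Set Site) :
    Disjoint (openDrawing ω R) (shiftDual '' openDrawing (dualConfig ω) R') := by
  rw [Set.disjoint_left]
  rintro w hw ⟨w', hw', hww'⟩
  rw [shiftDual, Prod.ext_iff] at hww'
  rcases hw with ⟨v, -, rfl⟩ | ⟨e, he, -, -, rfl⟩ <;>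
    rcases hw' with ⟨v', -, rfl⟩ | ⟨e', he', -, -, rfl⟩
  · simp only [double] at hww'
    lia
  · obtain ⟨⟨x, y⟩, _ | _⟩ := e' <;> simp [midpoint, double] at hww' <;> lia
  · obtain ⟨⟨x, y⟩, _ | _⟩ := e <;> simp [midpoint, double] at hww' <;> lia
  · have hcross : e = crossedBond e' := by
      obtain ⟨⟨x, y⟩, _ | _⟩ := e <;> obtain ⟨⟨x', y'⟩, _ | _⟩ := e' <;>
        simp [midpoint, crossedBond] at hww' ⊢ <;> lia
    rw [dualConfig, ← hcross, he] at he'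
    contradiction

variable {a b c d a' b' c' d' : ℤ} {u v u' v' : Site}

lemma IsHorizCrossing.not_isVertCrossing_dual (h : IsHorizCrossing ω a b c d u v)
    (ha : a ≤ a') (hb : b' < b) (hc : c' < c) (hd : d ≤ d') :
    ¬ IsVertCrossing (dualConfig ω) a' b' c' d' u' v' := by
  intro h'
  obtain ⟨hu, rfl, rfl, hconn⟩ := h
  obtain ⟨hu', rfl, rfl, hconn'⟩ := h'
  refine not_disjoint_of_crossing hconn'.pathIn_shiftDual hconn.pathIn_openDrawing
    (Set.mem_image_of_mem _ (double_mem_openDrawing _ (hconn'.mem hu')))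
    (double_mem_openDrawing _ hu) ?_ ?_ (disjoint_openDrawing_dual ω _ _).symm
  · rintro _ ⟨w, hw, rfl⟩
    have := mem_rect.1 (openDrawing_subset_rect hw)
    simp only [shiftDual, double]
    lia
  · intro w hw
    have := mem_rect.1 (openDrawing_subset_rect hw)
    simp only [shiftDual, double]
    lia

lemma IsVertCrossing.not_isHorizCrossing_dual (h : IsVertCrossing ω a b c d u v)
    (ha : a' < a) (hb : b ≤ b') (hc : c ≤ c') (hd : d' < d) :
    ¬ IsHorizCrossing (dualConfig ω) a' b' c' d' u' v' := by
  intro h'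
  obtain ⟨hu, rfl, rfl, hconn⟩ := h
  obtain ⟨hu', rfl, rfl, hconn'⟩ := h'
  refine not_disjoint_of_crossing hconn.pathIn_openDrawing hconn'.pathIn_shiftDual
    (double_mem_openDrawing _ (hconn.mem hu))
    (Set.mem_image_of_mem _ (double_mem_openDrawing _ hu')) ?_ ?_ (disjoint_openDrawing_dual ω _ _)
  · intro w hw
    have := mem_rect.1 (openDrawing_subset_rect hw)
    simp only [shiftDual, double]
    lia
  · rintro _ ⟨w, hw, rfl⟩
    have := mem_rect.1 (openDrawing_subset_rect hw)
    simp only [shiftDual, double]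
    lia

/-- Two functions `f`, `g`, thought of as living on the sites and on the faces of an `n + 1` by `n`
box, such that no edge separates two values of `f` while its dual edge separates two values
of `g`. -/
structure IsDualPair (n : ℕ) (f g : ℤ → ℤ → ℤ) : Prop where
  left : ∀ y : ℤ, 0 ≤ y → y < n → f 0 y = 1
  right : ∀ y : ℤ, 0 ≤ y → y < n → f n y = 0
  bot : ∀ x : ℤ, 0 ≤ x → x < n → g x (-1) = 1
  top : ∀ x : ℤ, 0 ≤ x → x < n → g x (n - 1) = 0
  horiz : ∀ x y : ℤ, 0 ≤ x → x < n → -1 ≤ y → y + 1 < n →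
    f x (y + 1) = f (x + 1) (y + 1) ∨ g x y = g x (y + 1)
  vert : ∀ x y : ℤ, 0 ≤ x → x + 1 < n → 0 ≤ y → y + 1 < n →
    f (x + 1) y = f (x + 1) (y + 1) ∨ g x y = g (x + 1) y

namespace IsDualPair

variable {n : ℕ} {f g : ℤ → ℤ → ℤ}

lemma sum_up (h : IsDualPair n f g) {y : ℤ} (hy : -1 ≤ y) (hyn : y + 1 < n) :
    ∑ x ∈ Finset.range n, (f (x + 1) (y + 1) - f x (y + 1)) * g x (y + 1) =
      ∑ x ∈ Finset.range n, (f (x + 1) (y + 1) - f x (y + 1)) * g x y :=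
  Finset.sum_congr rfl fun x hx ↦ by
    rw [Finset.mem_range] at hx
    rcases h.horiz x y (by lia) (by lia) hy hyn with h | h <;> simp [h]

lemma sum_switch (h : IsDualPair n f g) {y : ℤ} (hy : 0 ≤ y) (hyn : y + 1 < n) :
    ∑ x ∈ Finset.range n, (f (x + 1) (y + 1) - f x (y + 1)) * g x y =
      ∑ x ∈ Finset.range n, (f (x + 1) y - f x y) * g x y := by
  have hstep : ∀ x ∈ Finset.range n, (f (x + 1) (y + 1) - f x (y + 1)) * g x y -
      (f (x + 1) y - f x y) * g x y = (f (x + 1 : ℕ) (y + 1) - f (x + 1 : ℕ) y) * g (x + 1 : ℕ) y -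
        (f x (y + 1) - f x y) * g x y := fun x hx ↦ by
    rw [Finset.mem_range] at hx
    rcases Nat.lt_or_ge (x + 1) n with hxn | hxn
    · rcases h.vert x y (by lia) (by lia) hy hyn with h | h <;> push_cast <;> rw [h] <;> ring
    · have hfn : (x : ℤ) + 1 = n := by lia
      push_cast
      rw [hfn, h.right y hy (by lia), h.right (y + 1) (by lia) hyn]
      ring
  rw [← sub_eq_zero, ← Finset.sum_sub_distrib, Finset.sum_congr rfl hstep,
    Finset.sum_range_sub fun x : ℕ ↦ (f x (y + 1) - f x y) * g x y, Nat.cast_zero,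
    h.left y hy (by lia), h.left (y + 1) (by lia) hyn, h.right y hy (by lia),
    h.right (y + 1) (by lia) hyn]
  ring

lemma sum_eq_neg_one (h : IsDualPair n f g) {k : ℕ} (hk : k < n) :
    ∑ x ∈ Finset.range n, (f (x + 1) k - f x k) * g x k = -1 := by
  induction k with
  | zero =>
    have hbot : ∀ x ∈ Finset.range n,
        (f (x + 1) 0 - f x 0) * g x (-1) = f (x + 1 : ℕ) 0 - f x 0 := fun x hx ↦ by
      rw [Finset.mem_range] at hx
      rw [h.bot x (by lia) (by lia), mul_one, Nat.cast_succ]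
    have hup := h.sum_up le_rfl (by lia)
    rw [neg_add_cancel] at hup
    rw [Nat.cast_zero, hup, Finset.sum_congr rfl hbot, Finset.sum_range_sub fun x : ℕ ↦ f x 0,
      Nat.cast_zero, h.left 0 le_rfl (by lia), h.right 0 le_rfl (by lia), zero_sub]
  | succ k ih =>
    rw [Nat.cast_succ, h.sum_up (by lia) (by lia), h.sum_switch (by lia) (by lia), ih (by lia)]

lemma false (h : IsDualPair n f g) (hn : 1 ≤ n) : False := by
  have hsum := h.sum_eq_neg_one (Nat.sub_lt hn one_pos)
  rw [Finset.sum_eq_zero] at hsum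
  · lia
  · intro x hx
    rw [Finset.mem_range] at hx
    rw [Nat.cast_sub hn, Nat.cast_one, h.top x (by lia) (by lia), mul_zero]

end IsDualPair

open Classical in
/-- The indicator of the set of sites connected to a site of `A ∩ R` inside `R`. -/
noncomputable def reached (ω : BondConfig) (R A : Set Site) (x y : ℤ) : ℤ :=
  if ∃ a ∈ R, a ∈ A ∧ ConnIn ω R a (x, y) then 1 else 0

variable {A B : Set Site}

lemma reached_of_mem {x y : ℤ} (h : (x, y) ∈ R) (hA : (x, y) ∈ A) : reached ω R A x y = 1 :=
  if_pos ⟨_, h, hA, .refl⟩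

lemma reached_of_notMem_connEvent {x y : ℤ} (hω : ω ∉ connEvent R A B) (hB : (x, y) ∈ B) :
    reached ω R A x y = 0 :=
  if_neg fun ⟨a, ha, haA, h⟩ ↦ hω ⟨a, ha, _, h.mem ha, haA, hB, h⟩

lemma reached_eq_of_bond {e : Bond} (he : ω e = true) (h₁ : e.1 ∈ R) (h₂ : tip e ∈ R) :
    reached ω R A e.1.1 e.1.2 = reached ω R A (tip e).1 (tip e).2 := by
  have hstep : OpenStep ω e.1 (tip e) := ⟨e, he, .inl ⟨rfl, rfl⟩⟩
  unfold reached
  congr 1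
  refine propext (exists_congr fun a ↦ and_congr_right fun _ ↦ and_congr_right fun _ ↦ ?_)
  exact ⟨fun h ↦ .tail h ⟨hstep, h₁, h₂⟩, fun h ↦ .tail h ⟨hstep.symm, h₂, h₁⟩⟩

/-- Otherwise the sites reached from the left and the dual sites reached from the bottom form a
dual pair. -/
lemma mem_horizCross_or_dualConfig_mem_vertCross {n : ℕ} (hn : 1 ≤ n) (ω : BondConfig) :
    ω ∈ horizCross 0 n 0 (n - 1) ∨ dualConfig ω ∈ vertCross 0 (n - 1) (-1) (n - 1) := by
  by_contra! hω
  set R := rect 0 n 0 (n - 1)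
  set R' := rect 0 (n - 1) (-1) (n - 1)
  have hdual (e : Bond) : ω (crossedBond e) = true ∨ dualConfig ω e = true := by
    rw [dualConfig]; cases ω (crossedBond e) <;> simp
  refine IsDualPair.false (f := reached ω R {v | v.1 = 0})
    (g := reached (dualConfig ω) R' {v | v.2 = -1}) ⟨?_, ?_, ?_, ?_, ?_, ?_⟩ hn
  · exact fun y h₀ h₁ ↦ reached_of_mem (by simp only [R, mem_rect]; lia) rfl
  · exact fun y _ _ ↦ reached_of_notMem_connEvent hω.1 rfl
  · exact fun x h₀ h₁ ↦ reached_of_mem (by simp only [R', mem_rect]; lia) rfl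
  · exact fun x _ _ ↦ reached_of_notMem_connEvent hω.2 rfl
  · intro x y hx hxn hy hyn
    refine (hdual ((x, y), true)).imp (fun h ↦ ?_) fun h ↦ ?_
    · exact reached_eq_of_bond (e := ((x, y + 1), false)) h
        (by simp only [R, mem_rect]; lia) (by simp only [R, mem_rect, tip]; lia)
    · exact reached_eq_of_bond h
        (by simp only [R', mem_rect]; lia) (by simp only [R', mem_rect, tip]; lia)
  · intro x y hx hxn hy hyn
    refine (hdual ((x, y), false)).imp (fun h ↦ ?_) fun h ↦ ?_
    · exact reached_eq_of_bond (e := ((x + 1, y), true)) h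
        (by simp only [R, mem_rect]; lia) (by simp only [R, mem_rect, tip]; lia)
    · exact reached_eq_of_bond h
        (by simp only [R', mem_rect]; lia) (by simp only [R', mem_rect, tip]; lia)

end Duality

/-! ### Arm probabilities -/

section Arm

/-- The probability at `p = 1 / 2` that a rectangle of width `W` and height `H` is crossed from
left to right. -/
noncomputable def crossProb (W H : ℤ) : ℝ := (percMeasure half).real (horizCross 0 W 0 H)

lemma one_half_le_crossProb {n : ℕ} (hn : 1 ≤ n) : 1 / 2 ≤ crossProb n (n - 1) := by
  have hdual : (percMeasure half).real (dualConfig ⁻¹' vertCross 0 (n - 1) (-1) (n - 1)) ≤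
      crossProb n (n - 1) := by
    rw [measurePreserving_dualConfig.measureReal_preimage
      (isIncreasingLocal_vertCross _ _ _ _).measurableSet.nullMeasurableSet]
    refine ((isLatticeAut_add (1, 0)).comp isLatticeAut_swap).percMeasure_real_connEvent_le half
      (finite_rect _ _ _ _) ?_ ?_ ?_
    · intro v hv
      simp only [mem_rect, Function.comp, Prod.fst_add, Prod.snd_add, Prod.fst_swap,
        Prod.snd_swap] at *
      lia
    all_goals
      rintro v - h
      simp only [Set.mem_ofPred_eq, Function.comp, Prod.fst_add, Prod.fst_swap] at *
      lia
  have hone : (1 : ℝ) ≤ crossProb n (n - 1) +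
      (percMeasure half).real (dualConfig ⁻¹' vertCross 0 (n - 1) (-1) (n - 1)) := by
    rw [← probReal_univ (μ := percMeasure (ι := Bond) half)]
    refine (measureReal_mono fun ω _ ↦ ?_).trans (measureReal_union_le _ _)
    exact mem_horizCross_or_dualConfig_mem_vertCross hn ω
  linarith

/-- The event that the origin is connected to the boundary of the square of radius `n`. -/
def armEvent (n : ℕ) : Set BondConfig := connEvent (square n) {0} {v | supNorm v = n}

/-- The probability that the origin is connected to the boundary of the square of radius `n`. -/
noncomputable def armProb (p : unitInterval) (n : ℕ) : ℝ := (percMeasure p).real (armEvent n)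

lemma supNorm_zero : supNorm 0 = 0 := rfl

lemma supNorm_sub_le (u v : Site) : supNorm u ≤ supNorm (u - v) + supNorm v := by
  simp only [supNorm, Prod.fst_sub, Prod.snd_sub]; omega

lemma determinedBy_armEvent (n : ℕ) :
    DeterminedBy (bondsOf (finite_square n)) (armEvent n) :=
  determinedBy_connEvent _ _ _

lemma isUpperSet_armEvent (n : ℕ) : IsUpperSet (armEvent n) := isUpperSet_connEvent _ _ _

lemma percMeasure_real_connEvent_le_armProb (p : unitInterval) {R B : Set Site} (hR : R.Finite)
    {y : Site} {n : ℕ} (hB : ∀ v ∈ R, v ∈ B → n ≤ supNorm (v - y)) :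
    (percMeasure p).real (connEvent R {y} B) ≤ armProb p n := by
  refine ((isLatticeAut_add (-y)).percMeasure_real_connEvent_le p hR (R' := (· + -y) '' R)
    (A' := {0}) (B' := {v | n ≤ supNorm v}) (fun v hv ↦ ⟨v, hv, rfl⟩) ?_ ?_).trans
    (measureReal_mono ?_)
  · rintro v - rfl; simp
  · intro v hv h
    simpa only [Set.mem_ofPred_eq, ← sub_eq_add_neg] using hB v hv h
  · rintro ω ⟨_, h₀, b, -, rfl, hb, h⟩
    obtain ⟨c, -, hc, h⟩ := h.exists_first isStepLipschitz_supNorm h₀ (by simp [supNorm_zero]) hb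
    exact ⟨0, by simp [square, supNorm_zero], c, hc.le, rfl, hc, h.mono fun v hv ↦ hv.2⟩

lemma one_half_le_mul_armProb {n : ℕ} (hn : 1 ≤ n) : 1 / 2 ≤ n * armProb half n := by
  set R := rect 0 n 0 (n - 1)
  have hcover : horizCross 0 n 0 (n - 1) ⊆
      ⋃ y ∈ Finset.range n, connEvent R {(0, (y : ℤ))} {v | v.1 = n} := by
    rintro ω ⟨a, ha, b, hb, ha₁, hb₁, h⟩
    have ⟨_, _, _, _⟩ := mem_rect.1 ha
    simp only [Set.mem_iUnion, Finset.mem_range]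
    refine ⟨a.2.toNat, by omega, a, ha, b, hb, Prod.ext ha₁ ?_, hb₁, h⟩
    simp only
    omega
  calc (1 / 2 : ℝ) ≤ crossProb n (n - 1) := one_half_le_crossProb hn
    _ ≤ _ := measureReal_mono hcover (measure_ne_top _ _)
    _ ≤ _ := measureReal_biUnion_finset_le _ _
    _ ≤ ∑ _ ∈ Finset.range n, armProb half n := by
      refine Finset.sum_le_sum fun y _ ↦
        percMeasure_real_connEvent_le_armProb half (finite_rect _ _ _ _) fun v _ (hv : v.1 = n) ↦ ?_
      simp only [supNorm, Prod.fst_sub]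
      omega
    _ = n * armProb half n := by simp

end Arm

/-! ### Explored regions and boundary bonds -/

section Exploration

variable {ω : BondConfig} {R A : Set Site} {S C : Finset Site} {e : Bond}

lemma Joins.nbr {u v : Site} (h : Joins e u v) : Nbr u v :=
  OpenStep.nbr (ω := fun _ ↦ true) ⟨e, rfl, h⟩

lemma ConnIn.exists_exit {C : Set Site} {a b : Site} (h : ConnIn ω R a b) (ha : a ∈ C)
    (hb : b ∉ C) :
    ∃ u ∈ C, ∃ v ∈ R \ C, OpenStep ω u v ∧ ConnIn ω (R \ C) v b := by
  induction h with
  | refl => exact absurd ha hb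
  | @tail c b _ hcb ih =>
    by_cases hc : c ∈ C
    · exact ⟨c, hc, b, ⟨hcb.2.2, hb⟩, hcb.1, .refl⟩
    · obtain ⟨u, hu, v, hv, huv, hvc⟩ := ih hc
      exact ⟨u, hu, v, hv, huv, .tail hvc ⟨hcb.1, ⟨hcb.2.1, hc⟩, hcb.2.2, hb⟩⟩

/-- The sites discovered by exploring, inside `R`, the open clusters of the sites of `A`. -/
def explored (ω : BondConfig) (R A : Set Site) : Set Site := {v | ∃ a ∈ A, ConnIn ω R a v}

lemma determinedBy_explored_eq {C : Set Site} {F : Finset Bond}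
    (hF : ∀ e : Bond, e.1 ∈ R → tip e ∈ R → e.1 ∈ C ∨ tip e ∈ C → e ∈ F) :
    DeterminedBy F {ω | explored ω R A = C} := by
  refine .of_imp fun ω ω' hω (hC : explored ω R A = C) ↦ ?_
  have hstep {u v : Site} (hu : u ∈ R) (hv : v ∈ R) (huC : u ∈ C) :
      OpenStep ω u v ↔ OpenStep ω' u v := by
    refine exists_congr fun e ↦ and_congr_left ?_
    rintro (⟨rfl, rfl⟩ | ⟨rfl, rfl⟩)
    exacts [by rw [hω e (hF e hu hv (.inl huC))], by rw [hω e (hF e hv hu (.inr huC))]]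
  refine Set.Subset.antisymm ?_ ?_
  · rintro v ⟨a, ha, h⟩
    induction h with
    | refl => exact hC ▸ ⟨a, ha, .refl⟩
    | tail _ hstep' ih =>
      obtain ⟨a', ha', h'⟩ := hC.symm ▸ ih
      exact hC ▸ ⟨a', ha', .tail h' ⟨(hstep hstep'.2.1 hstep'.2.2 ih).2 hstep'.1, hstep'.2⟩⟩
  · rw [← hC]
    rintro v ⟨a, ha, h⟩
    refine ⟨a, ha, ?_⟩
    induction h with
    | refl => exact .refl
    | tail h' hstep' ih =>
      exact .tail ih ⟨(hstep hstep'.2.1 hstep'.2.2 (hC ▸ ⟨a, ha, h'⟩)).1 hstep'.1, hstep'.2⟩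

/-- The bonds with exactly one end in `S`. -/
def edgeBoundary (S : Finset Site) : Finset Bond :=
  ((S ∪ S.image (· - (1, 0)) ∪ S.image (· - (0, 1))) ×ˢ Finset.univ).filter
    fun e ↦ e.1 ∈ S ∧ tip e ∉ S ∨ tip e ∈ S ∧ e.1 ∉ S

lemma mem_edgeBoundary : e ∈ edgeBoundary S ↔ e.1 ∈ S ∧ tip e ∉ S ∨ tip e ∈ S ∧ e.1 ∉ S := by
  refine ⟨fun h ↦ (Finset.mem_filter.1 h).2, fun h ↦ Finset.mem_filter.2 ⟨?_, h⟩⟩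
  simp only [Finset.mem_product, Finset.mem_union, Finset.mem_image, Finset.mem_univ, and_true]
  rcases h with ⟨h, -⟩ | ⟨h, -⟩
  · exact .inl (.inl h)
  · obtain ⟨⟨x, y⟩, _ | _⟩ := e
    exacts [.inl (.inr ⟨_, h, by simp [tip]⟩), .inr ⟨_, h, by simp [tip]⟩]

lemma Joins.mem_edgeBoundary {u v : Site} (h : Joins e u v) (hu : u ∈ S) (hv : v ∉ S) :
    e ∈ edgeBoundary S := by
  rcases h with ⟨rfl, rfl⟩ | ⟨rfl, rfl⟩
  exacts [Perc.mem_edgeBoundary.2 (.inl ⟨hu, hv⟩), Perc.mem_edgeBoundary.2 (.inr ⟨hu, hv⟩)]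

lemma exists_joins_of_mem_edgeBoundary (he : e ∈ edgeBoundary S) :
    ∃ u ∈ S, ∃ v ∉ S, Joins e u v := by
  rcases mem_edgeBoundary.1 he with ⟨hu, hv⟩ | ⟨hu, hv⟩
  exacts [⟨_, hu, _, hv, .inl ⟨rfl, rfl⟩⟩, ⟨_, hu, _, hv, .inr ⟨rfl, rfl⟩⟩]

/-- The two ends of a bond. -/
def ends (e : Bond) : Set Site := {e.1, tip e}

lemma Joins.ends_eq {u v : Site} (h : Joins e u v) : ends e = {u, v} := by
  rcases h with ⟨rfl, rfl⟩ | ⟨rfl, rfl⟩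
  exacts [rfl, Set.pair_comm _ _]

/-- The expected number of bonds of the edge boundary of `S` which have an end connected to the
origin inside `S`. -/
noncomputable def exitSum (p : unitInterval) (S : Finset Site) : ℝ :=
  ∑ e ∈ edgeBoundary S, (percMeasure p).real (connEvent S {0} (ends e))

end Exploration

/-! ### Exit sums of finite regions -/

section ExitSum

variable {ω : BondConfig} {S C : Finset Site} {e : Bond} {n L : ℕ} {p : unitInterval}

lemma finite_square_diff (n : ℤ) (C : Set Site) : (square n \ C).Finite :=
  (finite_square n).subset Set.sdiff_subset

lemma armEvent_add_subset (h₀ : (0 : Site) ∈ S) (hS : ∀ v ∈ S, supNorm v < L) :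
    armEvent (n + L) ⊆ ⋃ e ∈ edgeBoundary S, ⋃ C ∈ S.powerset.filter (e ∈ edgeBoundary ·),
      {ω | explored ω S {0} = C} ∩ ({ω | ω e = true} ∩
        connEvent (square (n + L : ℕ) \ C) (ends e) {v | supNorm v = (n + L : ℕ)}) := by
  rintro ω ⟨_, -, b, hb, rfl, hbL, h⟩
  have hsub : explored ω S {0} ⊆ S := by
    rintro v ⟨_, rfl, hv⟩
    exact hv.mem h₀
  obtain ⟨C, hC⟩ := (S.finite_toSet.subset hsub).exists_finset_coe
  rw [← hC, Finset.coe_subset] at hsub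
  have hbC : b ∉ (C : Set Site) := fun hbC ↦ by
    have := hS b (hsub hbC)
    rw [show supNorm b = _ from hbL] at this
    lia
  obtain ⟨u, hu, v, hv, ⟨e, he, huv⟩, hvb⟩ := h.exists_exit (hC ▸ ⟨0, rfl, .refl⟩) hbC
  have hvS : v ∉ S := fun hvS ↦ hv.2 <| by
    obtain ⟨_, rfl, hu'⟩ := hC ▸ hu
    exact hC ▸ ⟨0, rfl, .tail hu' ⟨⟨e, he, huv⟩, hsub hu, hvS⟩⟩
  simp only [Set.mem_iUnion, Finset.mem_filter, Finset.mem_powerset]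
  refine ⟨e, huv.mem_edgeBoundary (hsub hu) hvS, C, ⟨hsub, huv.mem_edgeBoundary hu hv.2⟩,
    hC.symm, he, v, hv, b, ⟨hb, hbC⟩, ?_, hbL, hvb⟩
  exact huv.ends_eq ▸ .inr rfl

lemma percMeasure_real_connEvent_ends_le (hS : ∀ v ∈ S, supNorm v < L) (hCS : C ⊆ S)
    (he : e ∈ edgeBoundary C) :
    (percMeasure p).real (connEvent (square (n + L : ℕ) \ C) (ends e)
      {v | supNorm v = (n + L : ℕ)}) ≤ armProb p n := by
  obtain ⟨u, hu, v, -, huv⟩ := exists_joins_of_mem_edgeBoundary he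
  have hvL : supNorm v ≤ L := by
    have := isStepLipschitz_supNorm u v huv.nbr
    have := hS u (hCS hu)
    lia
  refine le_trans (measureReal_mono (connEvent_subset subset_rfl (A' := {v}) ?_ fun _ _ h ↦ h))
    (percMeasure_real_connEvent_le_armProb p (finite_square_diff _ _)
      (y := v) fun w _ (hw : supNorm w = (n + L : ℕ)) ↦ ?_)
  · intro w hw h
    rcases huv.ends_eq ▸ h with rfl | rfl
    exacts [absurd hu hw.2, rfl]
  · have := supNorm_sub_le w v
    push_cast at hw
    lia

lemma percMeasure_real_explored_inter (he : e ∈ edgeBoundary S)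
    (heC : e ∈ edgeBoundary C) (n : ℤ) (B : Set Site) :
    (percMeasure p).real ({ω | explored ω S {0} = C} ∩ ({ω | ω e = true} ∩
        connEvent (square n \ C) (ends e) B)) =
      (percMeasure p).real {ω | explored ω S {0} = C} *
        (p * (percMeasure p).real (connEvent (square n \ C) (ends e) B)) := by
  set F := (bondsOf S.finite_toSet).filter fun f ↦ tip f ∈ S ∧ (f.1 ∈ C ∨ tip f ∈ C)
  set G := (bondsOf (finite_square n)).filter fun f ↦ f.1 ∉ C ∧ tip f ∉ C
  have hF : DeterminedBy F {ω | explored ω S {0} = C} := determinedBy_explored_eq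
    fun f h₁ h₂ h₃ ↦ Finset.mem_filter.2 ⟨mem_bondsOf.2 h₁, h₂, h₃⟩
  have hG : DeterminedBy G (connEvent (square n \ C) (ends e) B) :=
    determinedBy_connEvent_of_forall (fun f h₁ h₂ ↦ Finset.mem_filter.2
      ⟨mem_bondsOf.2 h₁.1, h₁.2, h₂.2⟩) _ _
  have hopen : DeterminedBy {e} {ω : BondConfig | ω e = true} :=
    .of_imp fun ω ω' hω h ↦ (hω e (Finset.mem_singleton_self e)).symm.trans h
  have heG : Disjoint {e} G := Finset.disjoint_singleton_left.2 fun h ↦ by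
    obtain ⟨-, h₁, h₂⟩ := Finset.mem_filter.1 h
    rcases mem_edgeBoundary.1 heC with h | h
    exacts [h₁ h.1, h₂ h.1]
  have hdisj : Disjoint F ({e} ∪ G) := Finset.disjoint_union_right.2
    ⟨Finset.disjoint_singleton_right.2 fun h ↦ ?_, Finset.disjoint_left.2 fun f hf hf' ↦ ?_⟩
  · rw [percMeasure_indep p hdisj hF (hopen.inter_union hG), percMeasure_indep p heG hopen hG,
      percMeasure_real_open]
  · obtain ⟨h₁, h₂, -⟩ := Finset.mem_filter.1 h
    rcases mem_edgeBoundary.1 he with h | h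
    exacts [h.2 h₂, h.2 (mem_bondsOf.1 h₁)]
  · obtain ⟨-, -, h⟩ := Finset.mem_filter.1 hf
    obtain ⟨-, h₁, h₂⟩ := Finset.mem_filter.1 hf'
    exact h.elim h₁ h₂

lemma sum_percMeasure_real_explored_le (h₀ : (0 : Site) ∈ S) :
    ∑ C ∈ S.powerset.filter (e ∈ edgeBoundary ·), (percMeasure p).real
      {ω | explored ω S {0} = C} ≤ (percMeasure p).real (connEvent S {0} (ends e)) := by
  rw [← measureReal_biUnion_finset]
  · refine measureReal_mono (Set.iUnion₂_subset fun C hC ω (hω : explored ω S {0} = C) ↦ ?_)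
    obtain ⟨hCS, heC⟩ := Finset.mem_filter.1 hC
    obtain ⟨u, hu, v, -, huv⟩ := exists_joins_of_mem_edgeBoundary heC
    obtain ⟨_, rfl, h⟩ := hω.symm ▸ Finset.mem_coe.2 hu
    exact ⟨0, h₀, u, Finset.mem_powerset.1 hCS hu, rfl, huv.ends_eq ▸ .inl rfl, h⟩
  · exact fun C _ C' _ hne ↦ Set.disjoint_left.2 fun ω h h' ↦
      hne (Finset.coe_injective (h.symm.trans h'))
  · exact fun C _ ↦ (determinedBy_explored_eq (F := bondsOf S.finite_toSet)
      fun f h _ _ ↦ mem_bondsOf.2 h).measurableSet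

lemma armProb_add_le (h₀ : (0 : Site) ∈ S) (hS : ∀ v ∈ S, supNorm v < L) (n : ℕ) :
    armProb p (n + L) ≤ exitSum p S * (p * armProb p n) := by
  have hnonneg : 0 ≤ p * armProb p n := mul_nonneg p.2.1 measureReal_nonneg
  refine (measureReal_mono (armEvent_add_subset h₀ hS) (measure_ne_top _ _)).trans
    ((measureReal_biUnion_finset_le _ _).trans ?_)
  rw [exitSum, Finset.sum_mul]
  refine Finset.sum_le_sum fun e he ↦ (measureReal_biUnion_finset_le _ _).trans ?_
  calc ∑ C ∈ S.powerset.filter (e ∈ edgeBoundary ·), _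
      ≤ ∑ C ∈ S.powerset.filter (e ∈ edgeBoundary ·),
          (percMeasure p).real {ω | explored ω S {0} = C} * (p * armProb p n) := by
        refine Finset.sum_le_sum fun C hC ↦ ?_
        obtain ⟨hCS, heC⟩ := Finset.mem_filter.1 hC
        rw [Finset.mem_powerset] at hCS
        rw [percMeasure_real_explored_inter he heC]
        have := percMeasure_real_connEvent_ends_le (p := p) (n := n) hS hCS heC
        have := p.2.1
        gcongr
    _ ≤ _ := by
        rw [← Finset.sum_mul]
        exact mul_le_mul_of_nonneg_right (sum_percMeasure_real_explored_le h₀) hnonneg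

lemma exitSum_nonneg : 0 ≤ exitSum p S := Finset.sum_nonneg fun _ _ ↦ measureReal_nonneg

lemma exitSum_mono (S : Finset Site) : Monotone (exitSum · S) := fun _ _ h ↦
  Finset.sum_le_sum fun e _ ↦ percMeasure_real_mono (determinedBy_connEvent S.finite_toSet {0}
    (ends e)) (isUpperSet_connEvent _ _ _) h

lemma two_le_exitSum_half (h₀ : (0 : Site) ∈ S) : 2 ≤ exitSum half S := by
  obtain ⟨L, hS⟩ : ∃ L : ℕ, ∀ v ∈ S, supNorm v < L :=
    ⟨S.sup (fun v ↦ (supNorm v).toNat) + 1, fun v hv ↦ by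
      have := Finset.le_sup (f := fun v ↦ (supNorm v).toNat) hv
      grind⟩
  by_contra! hlt
  set r := exitSum half S * (1 / 2) with hr
  have hr₀ : 0 ≤ r := mul_nonneg exitSum_nonneg (by norm_num)
  have hdecay (k : ℕ) : armProb half (k * L) ≤ r ^ k := by
    induction k with
    | zero => exact measureReal_le_one.trans (pow_zero r).ge
    | succ k ih =>
      rw [add_mul, one_mul, pow_succ']
      refine (armProb_add_le h₀ hS (k * L)).trans ?_
      rw [coe_half, ← mul_assoc]
      exact mul_le_mul_of_nonneg_left ih hr₀
  have hlim := (tendsto_self_mul_const_pow_of_lt_one hr₀ (by linarith)).mul_const (L : ℝ)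
  rw [zero_mul] at hlim
  obtain ⟨k, hk, hk₁⟩ := ((hlim.eventually (gt_mem_nhds one_half_pos)).and
    (Filter.eventually_ge_atTop 1)).exists
  have hL : 0 < L := Int.natCast_pos.1 (supNorm_zero ▸ hS 0 h₀)
  have hkL := one_half_le_mul_armProb (Nat.mul_pos hk₁ hL)
  push_cast at hkL
  have := mul_le_mul_of_nonneg_left (hdecay k) (by positivity : (0 : ℝ) ≤ k * L)
  linarith

lemma two_le_exitSum (h₀ : (0 : Site) ∈ S) (hp : half ≤ p) : 2 ≤ exitSum p S :=
  (two_le_exitSum_half h₀).trans (exitSum_mono S hp)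

end ExitSum

/-! ### The differential inequality for the arm probability -/

section DifferentialInequality

variable {ω : BondConfig} {S : Finset Site} {e : Bond} {n : ℕ} {p : unitInterval}

/-- The event that the sites of the square of radius `n` which are not connected to its boundary
are those of `S`. -/
def screenedEvent (n : ℕ) (S : Finset Site) : Set BondConfig :=
  {ω | explored ω (square n) {v | supNorm v = n} = square n \ S}

/-- The possible sets of sites not connected to the boundary of the square of radius `n`, when the
origin is one of them. -/
noncomputable def screenedSets (n : ℕ) : Finset (Finset Site) :=
  (finite_square (n - 1)).toFinset.powerset.filter (0 ∈ ·)

lemma mem_screenedSets :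
    S ∈ screenedSets n ↔ (∀ v ∈ S, supNorm v < n) ∧ (0 : Site) ∈ S := by
  simp [screenedSets, Finset.subset_iff, square]

lemma determinedBy_screenedEvent {F : Finset Bond}
    (hF : ∀ e : Bond, e.1 ∈ square n → tip e ∈ square n → e.1 ∉ S ∨ tip e ∉ S → e ∈ F) :
    DeterminedBy F (screenedEvent n S) :=
  determinedBy_explored_eq fun e h₁ h₂ h ↦ hF e h₁ h₂ (h.imp And.right And.right)

lemma disjoint_screenedEvent {T : Finset Site} (hS : S ∈ screenedSets n) (hT : T ∈ screenedSets n)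
    (hne : S ≠ T) : Disjoint (screenedEvent n S) (screenedEvent n T) := by
  have hsub {U : Finset Site} (hU : U ∈ screenedSets n) : (U : Set Site) ⊆ square n :=
    fun v hv ↦ ((mem_screenedSets.1 hU).1 v hv).le
  refine Set.disjoint_left.2 fun ω h h' ↦ hne (Finset.coe_injective ?_)
  rw [← Set.sdiff_sdiff_cancel_left (hsub hS), ← Set.sdiff_sdiff_cancel_left (hsub hT)]
  exact congrArg (square n \ ·) (h.symm.trans h')

lemma one_sub_armProb_le (p : unitInterval) (n : ℕ) :
    1 - armProb p n ≤ ∑ S ∈ screenedSets n, (percMeasure p).real (screenedEvent n S) := by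
  rw [armProb, ← probReal_compl_eq_one_sub (determinedBy_armEvent n).measurableSet]
  refine (measureReal_mono ?_ (measure_ne_top _ _)).trans (measureReal_biUnion_finset_le _ _)
  intro ω hω
  obtain ⟨S, hS⟩ := ((finite_square n).subset (Set.sdiff_subset
    (t := explored ω (square n) {v | supNorm v = n}))).exists_finset_coe
  have hexp : explored ω (square n) {v | supNorm v = n} ⊆ square n := by
    rintro v ⟨a, ha, h⟩
    exact h.mem (le_of_eq ha)
  refine Set.mem_iUnion₂.2 ⟨S, mem_screenedSets.2 ⟨fun v hv ↦ ?_, ?_⟩, ?_⟩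
  · rw [← Finset.mem_coe, hS] at hv
    exact lt_of_le_of_ne hv.1 fun h ↦ hv.2 ⟨v, h, .refl⟩
  · rw [← Finset.mem_coe, hS]
    have h₀ : (0 : Site) ∈ square n := by simp [square, supNorm_zero]
    exact ⟨h₀, fun ⟨a, ha, h⟩ ↦ hω ⟨0, h₀, a, le_of_eq ha, rfl, ha, h.symm⟩⟩
  · change _ = _
    rw [hS, Set.sdiff_sdiff_cancel_left hexp]

lemma screenedEvent_inter_subset_pivotal (hS : S ∈ screenedSets n) (he : e ∈ edgeBoundary S) :
    screenedEvent n S ∩ connEvent S {0} (ends e) ⊆ Pivotal (armEvent n) e := by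
  rintro ω ⟨hω : explored _ _ _ = _, a, ha, b, hb, rfl, hbe, hab⟩
  obtain ⟨hSn, h₀⟩ := mem_screenedSets.1 hS
  have hsub : (S : Set Site) ⊆ square n := fun v hv ↦ (hSn v hv).le
  obtain ⟨u, hu, v, hv, huv⟩ := exists_joins_of_mem_edgeBoundary he
  obtain rfl : b = u := (huv.ends_eq ▸ hbe).resolve_right fun h ↦ hv (h ▸ hb)
  have hvn : v ∈ square n := by
    have := isStepLipschitz_supNorm b v huv.nbr
    have := hSn b hb
    change supNorm v ≤ n
    lia
  obtain ⟨c, hc, hcv⟩ : v ∈ explored _ _ _ := hω.ge ⟨hvn, hv⟩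
  have hle : ω ≤ Function.update ω e true := le_update_self_iff.2 le_top
  have hopen : ∀ f, ω f = true → Function.update ω e true f = true := fun f ↦
    Bool.le_iff_imp.1 (hle f)
  refine ⟨⟨0, hsub ha, c, le_of_eq hc, rfl, hc, ?_⟩, fun hmem ↦ ?_⟩
  · exact (ConnIn.of_imp (fun f _ _ ↦ hopen f) (hab.mono hsub)).trans <|
      .head ⟨⟨e, Function.update_self .., huv⟩, hsub hb, hvn⟩
        (hcv.symm.of_imp fun f _ _ ↦ hopen f)
  · obtain ⟨_, -, c', -, rfl, hc', h⟩ := isUpperSet_armEvent n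
      (update_le_self_iff.2 bot_le) hmem
    exact (hω.le ⟨c', hc', h.symm⟩).2 h₀

lemma sum_screenedEvent_mul_le_pivotal (p : unitInterval) (n : ℕ) (e : Bond) :
    ∑ S ∈ (screenedSets n).filter (e ∈ edgeBoundary ·), (percMeasure p).real (screenedEvent n S) *
        (percMeasure p).real (connEvent S {0} (ends e)) ≤
      (percMeasure p).real (Pivotal (armEvent n) e) := by
  have hscreened (S : Finset Site) : DeterminedBy
      ((bondsOf (finite_square n)).filter fun f ↦ f.1 ∉ S ∨ tip f ∉ S) (screenedEvent n S) :=
    determinedBy_screenedEvent fun f h₁ _ h ↦ Finset.mem_filter.2 ⟨mem_bondsOf.2 h₁, h⟩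
  have hconn (S : Finset Site) : DeterminedBy
      ((bondsOf S.finite_toSet).filter fun f ↦ tip f ∈ S) (connEvent S {0} (ends e)) :=
    determinedBy_connEvent_of_forall
      (fun f h₁ h₂ ↦ Finset.mem_filter.2 ⟨mem_bondsOf.2 h₁, h₂⟩) _ _
  have hindep (S : Finset Site) := percMeasure_indep p (Finset.disjoint_left.2 fun f hf hf' ↦ by
    obtain ⟨h₁, h₂⟩ := Finset.mem_filter.1 hf'
    exact (Finset.mem_filter.1 hf).2.elim (· (mem_bondsOf.1 h₁)) (· h₂)) (hscreened S) (hconn S)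
  simp only [← hindep]
  rw [← measureReal_biUnion_finset]
  · refine measureReal_mono (Set.iUnion₂_subset fun S hS ↦ ?_)
    obtain ⟨hSn, heS⟩ := Finset.mem_filter.1 hS
    exact screenedEvent_inter_subset_pivotal hSn heS
  · exact fun S hS T hT hne ↦ (disjoint_screenedEvent (Finset.mem_filter.1 hS).1
      (Finset.mem_filter.1 hT).1 hne).mono Set.inter_subset_left Set.inter_subset_left
  · exact fun S _ ↦ (hscreened S).measurableSet.inter (hconn S).measurableSet

lemma two_mul_one_sub_armProb_le (hp : half ≤ p) (n : ℕ) :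
    2 * (1 - armProb p n) ≤
      ∑ e ∈ bondsOf (finite_square n), (percMeasure p).real (Pivotal (armEvent n) e) := by
  have hmem : ∀ S e, S ∈ screenedSets n ∧ e ∈ edgeBoundary S ↔
      S ∈ (screenedSets n).filter (e ∈ edgeBoundary ·) ∧ e ∈ bondsOf (finite_square n) := by
    intro S e
    rw [Finset.mem_filter, iff_self_and, and_imp, mem_bondsOf]
    intro hS he
    have hSn := (mem_screenedSets.1 hS).1
    rcases mem_edgeBoundary.1 he with ⟨h, -⟩ | ⟨h, -⟩
    · exact (hSn _ h).le
    · have := isStepLipschitz_supNorm _ _ (nbr_tip e).symm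
      have := hSn _ h
      change supNorm e.1 ≤ n
      lia
  calc 2 * (1 - armProb p n)
      ≤ 2 * ∑ S ∈ screenedSets n, (percMeasure p).real (screenedEvent n S) := by
        gcongr
        exact one_sub_armProb_le p n
    _ ≤ ∑ S ∈ screenedSets n, (percMeasure p).real (screenedEvent n S) * exitSum p S := by
        rw [Finset.mul_sum]
        refine Finset.sum_le_sum fun S hS ↦ ?_
        rw [mul_comm]
        exact mul_le_mul_of_nonneg_left (two_le_exitSum (mem_screenedSets.1 hS).2 hp)
          measureReal_nonneg
    _ = ∑ e ∈ bondsOf (finite_square n), ∑ S ∈ (screenedSets n).filter (e ∈ edgeBoundary ·),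
          (percMeasure p).real (screenedEvent n S) *
            (percMeasure p).real (connEvent S {0} (ends e)) := by
        simp only [exitSum, Finset.mul_sum]
        exact Finset.sum_comm' hmem
    _ ≤ _ := Finset.sum_le_sum fun e _ ↦ sum_screenedEvent_mul_le_pivotal p n e

lemma one_sub_exp_le_armProb (hp : half ≤ p) (n : ℕ) :
    1 - Real.exp (1 - 2 * p) ≤ armProb p n := by
  let f := localProb (bondsOf (finite_square n)) (armEvent n)
  let D (x : ℝ) := ∑ e ∈ bondsOf (finite_square n),
    localProb (bondsOf (finite_square n)) (Pivotal (armEvent n) e) x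
  have hf (q : unitInterval) : armProb q n = f q := (determinedBy_armEvent n).percMeasure_real q
  have hD (q : unitInterval) (hq : half ≤ q) : 2 * (1 - f q) ≤ D q := by
    simpa only [hf, ((determinedBy_armEvent n).pivotal _).percMeasure_real]
      using two_mul_one_sub_armProb_le hq n
  have hderiv (x : ℝ) : HasDerivAt (fun x ↦ (1 - f x) * Real.exp (2 * x))
      ((2 * (1 - f x) - D x) * Real.exp (2 * x)) x := by
    have h := ((hasDerivAt_localProb (F := bondsOf (finite_square n)) (isUpperSet_armEvent n)
      x).const_sub 1).fun_mul ((hasDerivAt_id x).const_mul 2).exp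
    refine h.congr_deriv ?_
    simp only [id, f, D]
    ring
  have hp' : (half : ℝ) ≤ p := hp
  have hanti : AntitoneOn (fun x : ℝ ↦ (1 - f x) * Real.exp (2 * x)) (Set.Icc half p) := by
    refine antitoneOn_of_deriv_nonpos (convex_Icc _ _)
      (fun x _ ↦ (hderiv x).continuousAt.continuousWithinAt)
      (fun x _ ↦ (hderiv x).differentiableAt.differentiableWithinAt) fun x hx ↦ ?_
    rw [interior_Icc] at hx
    rw [(hderiv x).deriv]
    exact mul_nonpos_of_nonpos_of_nonneg (sub_nonpos.2 <|
      hD ⟨x, half.2.1.trans hx.1.le, hx.2.le.trans p.2.2⟩ hx.1.le) (Real.exp_nonneg _)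
  have hle := hanti ⟨le_rfl, hp'⟩ ⟨hp', le_rfl⟩ hp'
  have hhalf : 0 ≤ f half := hf half ▸ measureReal_nonneg
  rw [hf, Real.exp_sub, sub_le_comm, le_div_iff₀ (Real.exp_pos _)]
  calc (1 - f p) * Real.exp (2 * p) ≤ (1 - f half) * Real.exp (2 * half) := hle
    _ ≤ 1 * Real.exp (2 * half) := by gcongr; linarith
    _ = Real.exp 1 := by rw [coe_half]; norm_num

end DifferentialInequality

/-! ### Crossings of long rectangles -/

section CrossProb

variable {W W₁ W₂ H a b c d : ℤ}

lemma crossProb_nonneg (W H : ℤ) : 0 ≤ crossProb W H := measureReal_nonneg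

lemma crossProb_le_horizCross (hW : b - a ≤ W) (hH : H ≤ d - c) (hab : a ≤ b) :
    crossProb W H ≤ (percMeasure half).real (horizCross a b c d) := by
  refine ((isLatticeAut_add (a, c)).percMeasure_real_connEvent_le half
    (R' := rect a (a + W) c d) (A' := {v | v.1 = a}) (B' := {v | v.1 = a + W}) (finite_rect _ _ _ _)
    ?_ ?_ ?_).trans (measureReal_mono ?_)
  · intro v hv
    simp only [mem_rect, Prod.fst_add, Prod.snd_add] at *
    lia
  · rintro v - hv
    simp only [Set.mem_ofPred_eq, Prod.fst_add] at *
    lia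
  · rintro v - hv
    simp only [Set.mem_ofPred_eq, Prod.fst_add] at *
    lia
  · rintro ω ⟨u, hu, v, -, rfl, hv, h⟩
    obtain ⟨z, -, rfl, hz⟩ := h.exists_first isStepLipschitz_fst hu hab <| by
      rw [Set.mem_ofPred_eq] at hv
      lia
    have hz' : ConnIn ω (rect u.1 z.1 c d) u z := hz.mono fun w hw ↦ by
      simp only [mem_rect, Set.mem_ofPred_eq] at *
      lia
    have hu' : u ∈ rect u.1 z.1 c d := by
      simp only [mem_rect] at *
      lia
    exact mem_horizCross.2 ⟨u, z, hu', rfl, rfl, hz'⟩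

lemma crossProb_le_vertCross (hW : d - c ≤ W) (hH : H ≤ b - a) (hcd : c ≤ d) :
    crossProb W H ≤ (percMeasure half).real (vertCross a b c d) :=
  (crossProb_le_horizCross hW hH hcd).trans <|
    isLatticeAut_swap.percMeasure_real_connEvent_le half (finite_rect _ _ _ _)
      (fun _ ⟨h₁, h₂, h₃, h₄⟩ ↦ ⟨h₃, h₄, h₁, h₂⟩) (fun _ _ h ↦ h) fun _ _ h ↦ h

lemma horizCross_le_crossProb (a b c d : ℤ) :
    (percMeasure half).real (horizCross a b c d) ≤ crossProb (b - a) (d - c) := by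
  refine (isLatticeAut_add (-a, -c)).percMeasure_real_connEvent_le half (finite_rect _ _ _ _)
    ?_ ?_ ?_
  · intro v hv
    simp only [mem_rect, Prod.fst_add, Prod.snd_add] at *
    lia
  all_goals
    rintro v - rfl
    simp only [Set.mem_ofPred_eq, Prod.fst_add]
    lia

lemma one_half_le_crossProb_of_le (hW : 1 ≤ W) (hWH : W ≤ H) : 1 / 2 ≤ crossProb W H := by
  have h := one_half_le_crossProb (n := H.toNat) (by lia)
  rw [Int.toNat_of_nonneg (by lia)] at h
  exact h.trans (crossProb_le_horizCross (by lia) (by lia) (by lia))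

lemma crossProb_mul_crossProb_le (hH : 1 ≤ H) (hW₁ : H ≤ W₁) (hW₂ : H ≤ W₂) :
    crossProb W₁ H * crossProb W₂ H * (1 / 2) ≤ crossProb (W₁ + W₂ - H) H := by
  have hsquare : 1 / 2 ≤ (percMeasure half).real (vertCross (W₁ - H) W₁ 0 H) :=
    (one_half_le_crossProb_of_le hH le_rfl).trans
      (crossProb_le_vertCross (by lia) (by lia) (by lia))
  refine ((((isIncreasingLocal_horizCross 0 W₁ 0 H).inter
    (isIncreasingLocal_horizCross (W₁ - H) (W₁ + W₂ - H) 0 H)).mul_le_inter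
    (isIncreasingLocal_vertCross (W₁ - H) W₁ 0 H) (by norm_num)
    ((isIncreasingLocal_horizCross _ _ _ _).mul_le_inter (isIncreasingLocal_horizCross _ _ _ _)
      (crossProb_nonneg _ _) (crossProb_le_horizCross (by lia) (by lia) (by lia))
      (crossProb_le_horizCross (by lia) (by lia) (by lia))) hsquare)).trans (measureReal_mono ?_)
  rintro ω ⟨⟨h₁, h₂⟩, h₃⟩
  obtain ⟨u₁, v₁, h₁⟩ := mem_horizCross.1 h₁
  obtain ⟨u₂, v₂, h₂⟩ := mem_horizCross.1 h₂
  obtain ⟨u₃, v₃, h₃⟩ := mem_vertCross.1 h₃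
  have hR₁ : rect 0 W₁ 0 H ⊆ rect 0 (W₁ + W₂ - H) 0 H :=
    rect_subset_rect le_rfl (by lia) le_rfl le_rfl
  have hR₂ : rect (W₁ - H) (W₁ + W₂ - H) 0 H ⊆ rect 0 (W₁ + W₂ - H) 0 H :=
    rect_subset_rect (by lia) le_rfl le_rfl le_rfl
  have hR₃ : rect (W₁ - H) W₁ 0 H ⊆ rect 0 (W₁ + W₂ - H) 0 H :=
    rect_subset_rect (by lia) (by lia) le_rfl le_rfl
  have h₁₃ := h₁.connIn_isVertCrossing h₃ (by lia) le_rfl le_rfl le_rfl hR₁ hR₃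
  have h₂₃ := h₂.connIn_isVertCrossing h₃ le_rfl (by lia) le_rfl le_rfl hR₂ hR₃
  exact mem_horizCross.2 ⟨u₁, v₂, hR₁ h₁.left_mem, h₁.left_eq, h₂.right_eq,
    (h₁₃.trans h₂₃.symm).trans (h₂.connIn.mono hR₂)⟩

lemma mul_pow_le_crossProb {x : ℝ} (hx : 0 ≤ x) (hH : 1 ≤ H) (hW : H ≤ W)
    (hxW : x ≤ crossProb W H) (k : ℕ) : x * (x / 2) ^ k ≤ crossProb (W + k * (W - H)) H := by
  induction k with
  | zero => simpa using hxW
  | succ k ih =>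
    have hk : 0 ≤ k * (W - H) := mul_nonneg (by lia) (by lia)
    calc x * (x / 2) ^ (k + 1) = x * (x / 2) ^ k * x * (1 / 2) := by ring
      _ ≤ crossProb (W + k * (W - H)) H * crossProb W H * (1 / 2) := by
        gcongr
        exact crossProb_nonneg _ _
      _ ≤ crossProb (W + k * (W - H) + W - H) H := crossProb_mul_crossProb_le hH (by lia) hW
      _ = _ := by congr 1; push_cast; ring

end CrossProb

/-! ### Connections from a side of a square to a part of the opposite side -/

section SideProb

/-- The event that a site of the region `R` on the vertical line `x` is connected inside `R` to a
site on the vertical line `y` whose height belongs to `I`. -/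
def sideEvent (R : Set Site) (x y : ℤ) (I : Set ℤ) : Set BondConfig :=
  connEvent R {v | v.1 = x} {v | v.1 = y ∧ v.2 ∈ I}

/-- The probability at `p = 1 / 2` that inside the square of radius `n` the left side is connected
to a site of the right side whose height belongs to `I`. -/
noncomputable def sideProb (n : ℤ) (I : Set ℤ) : ℝ :=
  (percMeasure half).real (sideEvent (rect (-n) n (-n) n) (-n) n I)

variable {n x₀ x₁ y₀ y₁ y : ℤ} {I J : Set ℤ}

lemma isIncreasingLocal_sideEvent (a b c d x y : ℤ) (I : Set ℤ) :
    IsIncreasingLocal (sideEvent (rect a b c d) x y I) :=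
  isIncreasingLocal_connEvent (finite_rect a b c d) _ _

lemma sideProb_mono (h : ∀ k ∈ I, -n ≤ k → k ≤ n → k ∈ J) : sideProb n I ≤ sideProb n J :=
  measureReal_mono <| connEvent_subset le_rfl (fun _ _ h ↦ h)
    fun v hv hvI ↦ ⟨hvI.1, h v.2 hvI.2 hv.2.2.1 hv.2.2.2⟩

lemma sideProb_union_le (n : ℤ) (I J : Set ℤ) :
    sideProb n (I ∪ J) ≤ sideProb n I + sideProb n J := by
  refine (measureReal_mono ?_).trans (measureReal_union_le _ _)
  rintro ω ⟨u, hu, v, hv, hun, ⟨hvn, hvI⟩, h⟩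
  exact hvI.imp (fun hvI ↦ ⟨u, hu, v, hv, hun, ⟨hvn, hvI⟩, h⟩)
    fun hvI ↦ ⟨u, hu, v, hv, hun, ⟨hvn, hvI⟩, h⟩

lemma sideProb_le_sideEvent (hx : x₁ - x₀ = 2 * n) (hy₀ : y₀ = y - n) (hy₁ : y₁ = y + n)
    (hIJ : ∀ k ∈ I, y + k ∈ J) :
    sideProb n I ≤ (percMeasure half).real (sideEvent (rect x₀ x₁ y₀ y₁) x₀ x₁ J) := by
  refine (isLatticeAut_add (x₀ + n, y)).percMeasure_real_connEvent_le half (finite_rect _ _ _ _)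
    ?_ ?_ ?_
  · intro v hv
    simp only [mem_rect, Prod.fst_add, Prod.snd_add] at *
    lia
  · rintro v - hv
    simp only [Set.mem_ofPred_eq, Prod.fst_add] at *
    lia
  · rintro v - ⟨hvn, hvI⟩
    refine ⟨by simp only [Prod.fst_add]; lia, ?_⟩
    rw [Prod.snd_add, add_comm]
    exact hIJ _ hvI

lemma sideEvent_le_reflect_snd (hy : y₀ + y₁ = 2 * y) (hIJ : ∀ k ∈ I, 2 * y - k ∈ J) :
    (percMeasure half).real (sideEvent (rect x₀ x₁ y₀ y₁) x₀ x₁ I) ≤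
      (percMeasure half).real (sideEvent (rect x₀ x₁ y₀ y₁) x₀ x₁ J) := by
  refine (isLatticeAut_sub_snd (2 * y)).percMeasure_real_connEvent_le half (finite_rect _ _ _ _)
    ?_ (fun _ _ h ↦ h) fun v _ hv ↦ ⟨hv.1, hIJ _ hv.2⟩
  intro v hv
  simp only [mem_rect] at *
  lia

lemma sideEvent_le_reflect_fst (x₀ x₁ y₀ y₁ : ℤ) (I : Set ℤ) :
    (percMeasure half).real (sideEvent (rect x₀ x₁ y₀ y₁) x₀ x₁ I) ≤
      (percMeasure half).real (sideEvent (rect x₀ x₁ y₀ y₁) x₁ x₀ I) := by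
  refine (isLatticeAut_sub_fst (x₀ + x₁)).percMeasure_real_connEvent_le half (finite_rect _ _ _ _)
    ?_ ?_ ?_
  · intro v hv
    simp only [mem_rect] at *
    lia
  · rintro v - rfl
    simp only [Set.mem_ofPred_eq]
    lia
  · rintro v - ⟨rfl, hvI⟩
    exact ⟨by lia, hvI⟩

lemma one_fourth_le_sideProb_Ici_zero (hn : 1 ≤ n) : 1 / 4 ≤ sideProb n (Set.Ici 0) := by
  have hsum : 1 / 2 ≤ sideProb n (Set.Iic 0 ∪ Set.Ici 0) :=
    (one_half_le_crossProb_of_le (W := 2 * n) (by lia) le_rfl).trans <|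
      (crossProb_le_horizCross (by lia) (by lia) (by lia)).trans <|
        measureReal_mono <| connEvent_subset le_rfl (fun _ _ h ↦ h)
          fun v _ hv ↦ ⟨hv, le_total v.2 0⟩
  have hreflect : sideProb n (Set.Iic 0) ≤ sideProb n (Set.Ici 0) :=
    sideEvent_le_reflect_snd (y := 0) (by lia) fun k (hk : k ≤ 0) ↦ by rw [Set.mem_Ici]; lia
  linarith [sideProb_union_le n (Set.Iic 0) (Set.Ici 0)]

/-- The least height `k` for which the left side of the square of radius `n` is connected with
probability at least `1 / 8` to the part of the right side with heights in `[0, k]`. -/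
noncomputable def sideQuantile (n : ℤ) : ℕ := sInf {k : ℕ | 1 / 8 ≤ sideProb n (Set.Icc 0 k)}

lemma toNat_mem_sideQuantile_set (hn : 1 ≤ n) :
    n.toNat ∈ {k : ℕ | 1 / 8 ≤ sideProb n (Set.Icc 0 k)} :=
  calc (1 / 8 : ℝ) ≤ 1 / 4 := by norm_num
    _ ≤ sideProb n (Set.Ici 0) := one_fourth_le_sideProb_Ici_zero hn
    _ ≤ sideProb n (Set.Icc 0 n.toNat) :=
      sideProb_mono fun _ hk _ hkn ↦ ⟨hk, hkn.trans n.self_le_toNat⟩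

lemma one_eighth_le_sideProb_Icc_sideQuantile (hn : 1 ≤ n) :
    1 / 8 ≤ sideProb n (Set.Icc 0 (sideQuantile n)) :=
  Nat.sInf_mem ⟨_, toNat_mem_sideQuantile_set hn⟩

lemma sideQuantile_le (hn : 1 ≤ n) : sideQuantile n ≤ n := by
  have : sideQuantile n ≤ n.toNat := Nat.sInf_le (toNat_mem_sideQuantile_set hn)
  lia

lemma lt_sideQuantile {s : ℤ} (hn : 1 ≤ n) (hs : sideProb n (Set.Icc 0 s) < 1 / 8) :
    s < sideQuantile n := by
  contrapose! hs
  exact (one_eighth_le_sideProb_Icc_sideQuantile hn).trans <|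
    sideProb_mono fun k hk _ _ ↦ ⟨hk.1, hk.2.trans hs⟩

lemma one_eighth_le_sideProb_Ici_sideQuantile (hn : 1 ≤ n) :
    1 / 8 ≤ sideProb n (Set.Ici (sideQuantile n)) := by
  have hquarter := one_fourth_le_sideProb_Ici_zero hn
  rcases Nat.eq_zero_or_pos (sideQuantile n) with h | h
  · rw [h, Nat.cast_zero]
    linarith
  · have hlt : ¬ 1 / 8 ≤ sideProb n (Set.Icc 0 (sideQuantile n - 1 : ℕ)) :=
      Nat.notMem_of_lt_sInf (Nat.sub_lt h one_pos)
    have hsplit : sideProb n (Set.Ici 0) ≤ sideProb n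
        (Set.Icc 0 (sideQuantile n - 1 : ℕ) ∪ Set.Ici (sideQuantile n)) :=
      sideProb_mono fun k (hk : 0 ≤ k) _ _ ↦ by
        rw [Set.mem_union, Set.mem_Icc, Set.mem_Ici]
        lia
    linarith [sideProb_union_le n (Set.Icc 0 (sideQuantile n - 1 : ℕ)) (Set.Ici (sideQuantile n))]

end SideProb

section Gluing

variable {r c l u : ℤ} {ω : BondConfig}

/-- The square of radius `r` centred at `(r, c)`. -/
def hub (r c : ℤ) : Set Site := rect 0 (2 * r) (c - r) (c + r)

lemma exists_connIn_hub {x y : ℤ} {v w : Site} {I : Set ℤ}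
    (h : IsVertCrossing ω 0 (2 * r) (c - r) (c + r) v w) (hI : ω ∈ sideEvent (hub r c) x y I)
    (hxy : x = 0 ∧ y = 2 * r ∨ x = 2 * r ∧ y = 0) :
    ∃ q ∈ hub r c, q.1 = y ∧ q.2 ∈ I ∧ ConnIn ω (hub r c) v q := by
  obtain ⟨p, hp, q, hq, hpx, ⟨hqy, hqI⟩, hpq⟩ := hI
  refine ⟨q, hq, hqy, hqI, ?_⟩
  rcases hxy with ⟨rfl, rfl⟩ | ⟨rfl, rfl⟩
  · exact (IsHorizCrossing.connIn_isVertCrossing ⟨hp, hpx, hqy, hpq⟩ h le_rfl le_rfl le_rfl le_rfl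
      le_rfl le_rfl).symm.trans hpq
  · exact (IsHorizCrossing.connIn_isVertCrossing ⟨hq, hqy, hpx, hpq.symm⟩ h le_rfl le_rfl le_rfl
      le_rfl le_rfl le_rfl).symm

lemma mem_horizCross_of_hub (hr : 1 ≤ r) (hc : 0 ≤ c) (hcr : c ≤ 2 * r)
    (hV : ω ∈ vertCross 0 (2 * r) (c - r) (c + r))
    (hRU : ω ∈ sideEvent (hub r c) 0 (2 * r) (Set.Ici u))
    (hRL : ω ∈ sideEvent (hub r c) 0 (2 * r) (Set.Iic l))
    (hLU : ω ∈ sideEvent (hub r c) (2 * r) 0 (Set.Ici u))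
    (hLL : ω ∈ sideEvent (hub r c) (2 * r) 0 (Set.Iic l))
    (hleft : ω ∈ sideEvent (rect (-(2 * r)) (2 * r) (-(2 * r)) (2 * r)) (-(2 * r)) (2 * r)
      (Set.Icc l u))
    (hright : ω ∈ sideEvent (rect 0 (4 * r) (-(2 * r)) (2 * r)) (4 * r) 0 (Set.Icc l u)) :
    ω ∈ horizCross (-(2 * r)) (4 * r) (-(2 * r)) (3 * r) := by
  obtain ⟨v, w, hV⟩ := mem_vertCross.1 hV
  obtain ⟨a, -, har, hau, hva⟩ := exists_connIn_hub hV hRU (.inl ⟨rfl, rfl⟩)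
  obtain ⟨b, hb, hbr, hbl, hvb⟩ := exists_connIn_hub hV hRL (.inl ⟨rfl, rfl⟩)
  obtain ⟨a', -, har', hau', hva'⟩ := exists_connIn_hub hV hLU (.inr ⟨rfl, rfl⟩)
  obtain ⟨b', hb', hbr', hbl', hvb'⟩ := exists_connIn_hub hV hLL (.inr ⟨rfl, rfl⟩)
  obtain ⟨x, hx, y, -, hxr, ⟨hyr, hyl, hyu⟩, hxy⟩ := hleft
  obtain ⟨x', hx', y', -, hxr', ⟨hyr', hyl', hyu'⟩, hxy'⟩ := hright
  simp only [Set.mem_ofPred_eq] at hxr hxr'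
  have hhub : hub r c ⊆ rect (-(2 * r)) (4 * r) (-(2 * r)) (3 * r) :=
    rect_subset_rect (by lia) (by lia) (by lia) (by lia)
  have hR : rect (-(2 * r)) (2 * r) (-(2 * r)) (2 * r) ⊆
    rect (-(2 * r)) (4 * r) (-(2 * r)) (3 * r) := rect_subset_rect le_rfl (by lia) le_rfl (by lia)
  have hR' : rect 0 (4 * r) (-(2 * r)) (2 * r) ⊆ rect (-(2 * r)) (4 * r) (-(2 * r)) (3 * r) :=
    rect_subset_rect (by lia) le_rfl le_rfl (by lia)
  have hbx : ConnIn ω (rect (-(2 * r)) (4 * r) (-(2 * r)) (3 * r)) b x := by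
    refine ConnIn.of_interlaced (hvb.symm.trans hva) hxy hhub hR hb hx (hbr.trans hyr.symm)
      (har.trans hyr.symm) (fun z hz ↦ ?_) (fun z hz ↦ hz.2.1.trans hyr.ge) (hbl.trans hyl)
      (hyu.trans hau)
    rw [hub, mem_rect] at hz
    lia
  have hbx' : ConnIn ω (rect (-(2 * r)) (4 * r) (-(2 * r)) (3 * r)) b' x' := by
    refine ConnIn.of_interlaced' (hvb'.symm.trans hva') hxy' hhub hR' hb' hx'
      (hbr'.trans hyr'.symm) (har'.trans hyr'.symm) (fun z hz ↦ ?_)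
      (fun z hz ↦ hyr'.le.trans hz.1) (hbl'.trans hyl')
      (hyu'.trans hau')
    rw [hub, mem_rect] at hz
    lia
  exact mem_horizCross.2 ⟨x, x', hR hx, hxr, hxr',
    (hbx.symm.trans ((hvb.symm.trans hvb').mono hhub)).trans hbx'⟩

lemma pow_le_crossProb_of_sideProb {k : ℤ} (hr : 1 ≤ r) (hc : 0 ≤ c) (hcr : c ≤ 2 * r)
    (hl : c - k ≤ l) (hu : u ≤ c + k) (hk : 1 / 8 ≤ sideProb r (Set.Ici k))
    (hlu : 1 / 16 ≤ sideProb (2 * r) (Set.Icc l u)) :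
    (1 / 2) ^ 21 ≤ crossProb (6 * r) (5 * r) := by
  have hV : 1 / 2 ≤ (percMeasure half).real (vertCross 0 (2 * r) (c - r) (c + r)) :=
    (one_half_le_crossProb_of_le (W := 2 * r) (H := 2 * r) (by lia) le_rfl).trans
      (crossProb_le_vertCross (by lia) (by lia) (by lia))
  have hRU : 1 / 8 ≤ (percMeasure half).real (sideEvent (hub r c) 0 (2 * r) (Set.Ici u)) :=
    hk.trans <| sideProb_le_sideEvent (by lia) rfl rfl fun j (hj : k ≤ j) ↦ by
      rw [Set.mem_Ici]; lia
  have hRL : 1 / 8 ≤ (percMeasure half).real (sideEvent (hub r c) 0 (2 * r) (Set.Iic l)) :=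
    hk.trans <| (sideProb_le_sideEvent (J := Set.Ici (c + k)) (by lia) rfl rfl
      fun j (hj : k ≤ j) ↦ by rw [Set.mem_Ici]; lia).trans <|
      sideEvent_le_reflect_snd (y := c) (by lia) fun j (hj : c + k ≤ j) ↦ by rw [Set.mem_Iic]; lia
  have hLU := hRU.trans (sideEvent_le_reflect_fst _ _ _ _ _)
  have hLL := hRL.trans (sideEvent_le_reflect_fst _ _ _ _ _)
  have hright : 1 / 16 ≤ (percMeasure half).real
      (sideEvent (rect 0 (4 * r) (-(2 * r)) (2 * r)) (4 * r) 0 (Set.Icc l u)) :=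
    hlu.trans <| (sideProb_le_sideEvent (y := 0) (by lia) (by lia) (by lia)
      fun j hj ↦ by rwa [zero_add]).trans (sideEvent_le_reflect_fst _ _ _ _ _)
  have hside (x y : ℤ) (I : Set ℤ) : IsIncreasingLocal (sideEvent (hub r c) x y I) :=
    isIncreasingLocal_sideEvent _ _ _ _ _ _ _
  have hcross := isIncreasingLocal_vertCross 0 (2 * r) (c - r) (c + r)
  have hR := (hside 0 (2 * r) (Set.Ici u)).inter (hside 0 (2 * r) (Set.Iic l))
  have hL := (hside (2 * r) 0 (Set.Ici u)).inter (hside (2 * r) 0 (Set.Iic l))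
  have hprod := ((hR.inter hL).inter hcross).mul_le_inter
    ((isIncreasingLocal_sideEvent _ _ _ _ _ _ _).inter (isIncreasingLocal_sideEvent _ _ _ _ _ _ _))
    (by norm_num)
    ((hR.inter hL).mul_le_inter hcross (by norm_num)
      (hR.mul_le_inter hL (by norm_num) ((hside _ _ _).mul_le_inter (hside _ _ _)
        (by norm_num) hRU hRL) ((hside _ _ _).mul_le_inter (hside _ _ _) (by norm_num) hLU hLL)) hV)
    ((isIncreasingLocal_sideEvent _ _ _ _ _ _ _).mul_le_inter
      (isIncreasingLocal_sideEvent _ _ _ _ _ _ _) (by norm_num) hlu hright)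
  calc (1 / 2 : ℝ) ^ 21 = 1 / 8 * (1 / 8) * (1 / 8 * (1 / 8)) * (1 / 2) * (1 / 16 * (1 / 16)) := by
        norm_num
    _ ≤ _ := hprod
    _ ≤ _ := measureReal_mono fun ω ⟨⟨⟨⟨hRU, hRL⟩, hLU, hLL⟩, hV⟩, hleft, hright⟩ ↦
      mem_horizCross_of_hub hr hc hcr hV hRU hRL hLU hLL hleft hright
    _ ≤ _ := horizCross_le_crossProb _ _ _ _
    _ = crossProb (6 * r) (5 * r) := by congr 1 <;> ring

/-- A lower bound for the crossing probabilities of `6 × 1` rectangles of good scales. -/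
noncomputable def crossConst : ℝ := (1 / 2) ^ 549

lemma crossConst_le_crossProb (hr : 1 ≤ r) (h : sideQuantile (2 * r) ≤ 4 * sideQuantile r) :
    crossConst ≤ crossProb (30 * r) (5 * r) := by
  have hshort : (1 / 2) ^ 21 ≤ crossProb (6 * r) (5 * r) := by
    set k := (sideQuantile r : ℤ)
    have hkr : k ≤ r := sideQuantile_le hr
    have htop := one_eighth_le_sideProb_Ici_sideQuantile hr
    have hsum : 1 / 8 ≤ sideProb (2 * r)
        (Set.Icc 0 (2 * k) ∪ Set.Icc (2 * k) (min (4 * k) (2 * r))) :=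
      (one_eighth_le_sideProb_Icc_sideQuantile (n := 2 * r) (by lia)).trans <|
        sideProb_mono fun j hj _ _ ↦ by
          simp only [Set.mem_union, Set.mem_Icc] at *
          omega
    by_cases hlow : 1 / 16 ≤ sideProb (2 * r) (Set.Icc 0 (2 * k))
    · exact pow_le_crossProb_of_sideProb hr (c := k) (by lia) (by lia) (by lia) (by lia) htop hlow
    · refine pow_le_crossProb_of_sideProb hr (c := min (3 * k) (2 * r)) (l := 2 * k)
        (u := min (4 * k) (2 * r)) (by omega) (by omega) (by omega) (by omega) htop ?_
      linarith [sideProb_union_le (2 * r) (Set.Icc 0 (2 * k))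
        (Set.Icc (2 * k) (min (4 * k) (2 * r)))]
  calc crossConst = (1 / 2) ^ 21 * ((1 / 2) ^ 21 / 2) ^ 24 := by
        rw [crossConst, show ((1 / 2 : ℝ) ^ 21 / 2) = (1 / 2) ^ 22 by norm_num, ← pow_mul,
          ← pow_add]
    _ ≤ crossProb (6 * r + (24 : ℕ) * (6 * r - 5 * r)) (5 * r) :=
      mul_pow_le_crossProb (by positivity) (by lia) (by lia) hshort 24
    _ = crossProb (30 * r) (5 * r) := by congr 1; push_cast; ring

end Gluing

/-! ### Circuits in annuli -/

section Circuit

variable {s t : ℤ} {R : Set Site} {a b : Site} {ω : BondConfig} {x : ℝ}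

/-- The event that four overlapping rectangles around the square of radius `s` are crossed in the
long direction, so that the crossings contain a circuit around this square. The two strips of
negative coordinates are shifted by one so that the event can also be used in the dual lattice. -/
def circuitEvent (s : ℤ) : Set BondConfig :=
  (vertCross s (2 * s) (-(3 * s)) (3 * s) ∩
      vertCross (-(2 * s) - 1) (-s - 1) (-(3 * s)) (3 * s)) ∩
    (horizCross (-(3 * s)) (3 * s) s (2 * s) ∩
      horizCross (-(3 * s)) (3 * s) (-(2 * s) - 1) (-s - 1))

lemma isIncreasingLocal_circuitEvent (s : ℤ) : IsIncreasingLocal (circuitEvent s) :=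
  ((isIncreasingLocal_vertCross _ _ _ _).inter (isIncreasingLocal_vertCross _ _ _ _)).inter
    ((isIncreasingLocal_horizCross _ _ _ _).inter (isIncreasingLocal_horizCross _ _ _ _))

lemma pow_four_le_circuitEvent (hs : 1 ≤ s) (hx : 0 ≤ x) (hxs : x ≤ crossProb (6 * s) s) :
    x ^ 4 ≤ (percMeasure half).real (circuitEvent s) := by
  have hvert (i j : ℤ) (hij : s ≤ j - i) :
      x ≤ (percMeasure half).real (vertCross i j (-(3 * s)) (3 * s)) :=
    hxs.trans (crossProb_le_vertCross (by lia) hij (by lia))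
  have hhoriz (i j : ℤ) (hij : s ≤ j - i) :
      x ≤ (percMeasure half).real (horizCross (-(3 * s)) (3 * s) i j) :=
    hxs.trans (crossProb_le_horizCross (by lia) hij (by lia))
  have hV := isIncreasingLocal_vertCross
  have hH := isIncreasingLocal_horizCross
  calc x ^ 4 = x * x * (x * x) := by ring
    _ ≤ (percMeasure half).real (circuitEvent s) :=
      ((hV _ _ _ _).inter (hV _ _ _ _)).mul_le_inter ((hH _ _ _ _).inter (hH _ _ _ _))
        (mul_nonneg hx hx)
        ((hV _ _ _ _).mul_le_inter (hV _ _ _ _) hx (hvert _ _ (by lia)) (hvert _ _ (by lia)))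
        ((hH _ _ _ _).mul_le_inter (hH _ _ _ _) hx (hhoriz _ _ (by lia)) (hhoriz _ _ (by lia)))

lemma exists_connIn_of_mem_circuitEvent (hs : 1 ≤ s) (hω : ω ∈ circuitEvent s)
    (hR : rect (-(3 * s)) (3 * s) (-(3 * s)) (3 * s) ⊆ R) :
    ∃ p, ∀ a b, ConnIn ω R a b → a ∈ R → supNorm a ≤ s → 2 * s + 1 ≤ supNorm b →
      ConnIn ω R a p := by
  obtain ⟨⟨h₁, h₂⟩, h₃, h₄⟩ := hω
  obtain ⟨p₁, _, h₁⟩ := mem_vertCross.1 h₁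
  obtain ⟨p₂, _, h₂⟩ := mem_vertCross.1 h₂
  obtain ⟨p₃, _, h₃⟩ := mem_horizCross.1 h₃
  obtain ⟨p₄, _, h₄⟩ := mem_horizCross.1 h₄
  have hsub {a b c d : ℤ} (ha : -(3 * s) ≤ a) (hb : b ≤ 3 * s) (hc : -(3 * s) ≤ c)
      (hd : d ≤ 3 * s) : rect a b c d ⊆ R := (rect_subset_rect ha hb hc hd).trans hR
  have hR₁ := hsub (a := s) (b := 2 * s) (by lia) (by lia) le_rfl le_rfl
  have hR₂ := hsub (a := -(2 * s) - 1) (b := -s - 1) (by lia) (by lia) le_rfl le_rfl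
  have hR₃ := hsub (c := s) (d := 2 * s) le_rfl le_rfl (by lia) (by lia)
  have hR₄ := hsub (c := -(2 * s) - 1) (d := -s - 1) le_rfl le_rfl (by lia) (by lia)
  have h₃₁ : ConnIn ω R p₃ p₁ :=
    h₃.connIn_isVertCrossing h₁ (by lia) (by lia) (by lia) (by lia) hR₃ hR₁
  have h₃₂ : ConnIn ω R p₃ p₂ :=
    h₃.connIn_isVertCrossing h₂ (by lia) (by lia) (by lia) (by lia) hR₃ hR₂
  have h₄₁ : ConnIn ω R p₄ p₁ :=
    h₄.connIn_isVertCrossing h₁ (by lia) (by lia) (by lia) (by lia) hR₄ hR₁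
  refine ⟨p₁, fun a b h ha has hbs ↦ ?_⟩
  obtain ⟨c, _, hac, -, h | h | h | h⟩ := h.exists_annulus_crossing ha (by lia) has hbs
  · exact hac.trans (h.connIn_isVertCrossing h₁ le_rfl (by lia) (by lia) (by lia)
      (hsub (by lia) (by lia) (by lia) (by lia)) hR₁)
  · exact hac.trans ((h.connIn_isVertCrossing h₂ (by lia) (by lia) (by lia) (by lia)
      (hsub (by lia) (by lia) (by lia) (by lia)) hR₂).trans (h₃₂.symm.trans h₃₁))
  · exact hac.trans ((h₃.connIn_isVertCrossing h (by lia) (by lia) le_rfl (by lia) hR₃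
      (hsub (by lia) (by lia) (by lia) (by lia))).symm.trans h₃₁)
  · exact hac.trans ((h₄.connIn_isVertCrossing h (by lia) (by lia) (by lia) (by lia) hR₄
      (hsub (by lia) (by lia) (by lia) (by lia))).symm.trans h₄₁)

lemma not_connIn_of_dualConfig_mem_circuitEvent (hs : 2 ≤ s)
    (hω : dualConfig ω ∈ circuitEvent s) (ha : a ∈ R) (has : supNorm a ≤ s)
    (hbs : 2 * s + 1 ≤ supNorm b) : ¬ ConnIn ω R a b := by
  obtain ⟨⟨h₁, h₂⟩, h₃, h₄⟩ := hω
  obtain ⟨_, _, h₁⟩ := mem_vertCross.1 h₁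
  obtain ⟨_, _, h₂⟩ := mem_vertCross.1 h₂
  obtain ⟨_, _, h₃⟩ := mem_horizCross.1 h₃
  obtain ⟨_, _, h₄⟩ := mem_horizCross.1 h₄
  intro h
  obtain ⟨_, _, -, -, h | h | h | h⟩ := h.exists_annulus_crossing ha (by lia) has hbs
  · exact h.not_isVertCrossing_dual le_rfl (by lia) (by lia) (by lia) h₁
  · exact h.not_isVertCrossing_dual (by lia) (by lia) (by lia) (by lia) h₂
  · exact h.not_isHorizCrossing_dual (by lia) (by lia) le_rfl (by lia) h₃
  · exact h.not_isHorizCrossing_dual (by lia) (by lia) (by lia) (by lia) h₄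

lemma crossProb_ge_of_sideProb_ge (hs : 1 ≤ s) (hst : 3 * s ≤ t) (hx : 0 ≤ x)
    (hxs : x ≤ crossProb (6 * s) s) (hside : 1 / 8 ≤ sideProb t (Set.Icc 0 s)) :
    (1 / 8) ^ 2 * x ^ 4 ≤ crossProb (4 * t) (2 * t) := by
  set R := rect (-(2 * t)) (2 * t) (-t) t
  have hleft : 1 / 8 ≤ (percMeasure half).real
      (sideEvent (rect (-(2 * t)) 0 (-t) t) (-(2 * t)) 0 (Set.Icc 0 s)) :=
    hside.trans (sideProb_le_sideEvent (y := 0) (by lia) (by lia) (by lia) (by simp))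
  have hright : 1 / 8 ≤ (percMeasure half).real
      (sideEvent (rect 0 (2 * t) (-t) t) (2 * t) 0 (Set.Icc 0 s)) :=
    hside.trans <| (sideProb_le_sideEvent (y := 0) (by lia) (by lia) (by lia) (by simp)).trans
      (sideEvent_le_reflect_fst _ _ _ _ (Set.Icc 0 s))
  have hprod := ((isIncreasingLocal_sideEvent _ _ _ _ _ _ _).inter
    (isIncreasingLocal_sideEvent _ _ _ _ _ _ _)).mul_le_inter (isIncreasingLocal_circuitEvent s)
    (by positivity) ((isIncreasingLocal_sideEvent _ _ _ _ _ _ _).mul_le_inter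
      (isIncreasingLocal_sideEvent _ _ _ _ _ _ _) (by norm_num) hleft hright)
    (pow_four_le_circuitEvent hs hx hxs)
  have hglue : sideEvent (rect (-(2 * t)) 0 (-t) t) (-(2 * t)) 0 (Set.Icc 0 s) ∩
      sideEvent (rect 0 (2 * t) (-t) t) (2 * t) 0 (Set.Icc 0 s) ∩ circuitEvent s ⊆
        horizCross (-(2 * t)) (2 * t) (-t) t := by
    rintro ω ⟨⟨⟨u, hu, v, hv, hut, ⟨hv₀, hvs⟩, h⟩, u', _, v', hv', hut', ⟨hv₀', hvs'⟩, h'⟩, hω⟩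
    obtain ⟨p, hp⟩ := exists_connIn_of_mem_circuitEvent (R := R) hs hω
      (rect_subset_rect (by lia) (by lia) (by lia) (by lia))
    have hR : rect (-(2 * t)) 0 (-t) t ⊆ R := rect_subset_rect le_rfl (by lia) le_rfl le_rfl
    have hR' : rect 0 (2 * t) (-t) t ⊆ R := rect_subset_rect (by lia) le_rfl le_rfl le_rfl
    simp only [Set.mem_ofPred_eq, Set.mem_Icc] at hut hut' hvs hvs'
    have hvp := hp v u (h.symm.mono hR) (hR hv) (by unfold supNorm; omega)
      (by unfold supNorm; omega)
    have hvp' := hp v' u' (h'.symm.mono hR') (hR' hv') (by unfold supNorm; omega)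
      (by unfold supNorm; omega)
    exact mem_horizCross.2 ⟨u, u', hR hu, hut, hut',
      ((h.mono hR).trans hvp).trans (hvp'.symm.trans (h'.symm.mono hR'))⟩
  calc (1 / 8) ^ 2 * x ^ 4 = 1 / 8 * (1 / 8) * x ^ 4 := by ring
    _ ≤ _ := hprod
    _ ≤ _ := measureReal_mono hglue
    _ ≤ _ := horizCross_le_crossProb _ _ _ _
    _ = crossProb (4 * t) (2 * t) := by congr 1 <;> ring

/-- The bonds in the annulus of radii `s` and `3 * s`. -/
noncomputable def annulusBonds (s : ℤ) : Finset Bond :=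
  {e ∈ bondsOf (finite_square (3 * s)) | s ≤ supNorm e.1}

lemma determinedBy_circuitEvent (hs : 1 ≤ s) : DeterminedBy (annulusBonds s) (circuitEvent s) := by
  have hrect (a b c d : ℤ) (A B : Set Site)
      (h : ∀ v ∈ rect a b c d, s ≤ supNorm v ∧ supNorm v ≤ 3 * s) :
      DeterminedBy (annulusBonds s) (connEvent (rect a b c d) A B) :=
    determinedBy_connEvent_of_forall (fun e he _ ↦
      Finset.mem_filter.2 ⟨mem_bondsOf.2 (h _ he).2, (h _ he).1⟩) A B
  refine ((hrect _ _ _ _ _ _ ?_).inter (hrect _ _ _ _ _ _ ?_)).inter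
    ((hrect _ _ _ _ _ _ ?_).inter (hrect _ _ _ _ _ _ ?_))
  all_goals
    intro v hv
    rw [mem_rect] at hv
    unfold supNorm
    omega

variable {r : ℕ → ℤ}

lemma pairwise_disjoint_annulusBonds (hr : ∀ i, 1 ≤ r i) (hr' : ∀ i, 3 * r i < r (i + 1)) :
    Pairwise (Function.onFun Disjoint fun i ↦ annulusBonds (r i)) := by
  have hmono : Monotone r := monotone_nat_of_le_succ fun i ↦ by linarith [hr i, hr' i]
  refine (pairwise_disjoint_on _).2 fun i j hij ↦ Finset.disjoint_left.2 fun e hi hj ↦ ?_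
  have hle : supNorm e.1 ≤ 3 * r i := mem_bondsOf.1 (Finset.mem_filter.1 hi).1
  have hge : r j ≤ supNorm e.1 := (Finset.mem_filter.1 hj).2
  linarith [hr' i, hmono (Nat.succ_le_of_lt hij)]

lemma percMeasure_real_connEvent_le_pow (hr : ∀ i, 2 ≤ r i) (hr' : ∀ i, 3 * r i < r (i + 1))
    {k : ℕ} (hx : ∀ i < k, x ≤ (percMeasure half).real (circuitEvent (r i))) (R : Set Site)
    {A B : Set Site} (hA : ∀ i < k, ∀ v ∈ A, supNorm v ≤ r i)
    (hB : ∀ i < k, ∀ v ∈ B, 2 * r i + 1 ≤ supNorm v) :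
    (percMeasure half).real (connEvent R A B) ≤ (1 - x) ^ k := by
  have hdet (i : ℕ) : DeterminedBy (annulusBonds (r i)) (circuitEvent (r i))ᶜ :=
    (determinedBy_circuitEvent (one_le_two.trans (hr i))).compl
  have hsub : connEvent R A B ⊆
      dualConfig ⁻¹' ⋂ i ∈ Finset.range k, (circuitEvent (r i))ᶜ := by
    rintro ω ⟨u, hu, v, -, huA, hvB, h⟩
    refine Set.mem_iInter₂.2 fun i hi hω ↦ ?_
    rw [Finset.mem_range] at hi
    exact not_connIn_of_dualConfig_mem_circuitEvent (hr i) hω hu (hA i hi u huA) (hB i hi v hvB) h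
  have hmeas : MeasurableSet (⋂ i ∈ Finset.range k, (circuitEvent (r i))ᶜ) :=
    Finset.measurableSet_biInter _ fun i _ ↦ (hdet i).measurableSet
  calc (percMeasure half).real (connEvent R A B)
      ≤ (percMeasure half).real (dualConfig ⁻¹' ⋂ i ∈ Finset.range k, (circuitEvent (r i))ᶜ) :=
        measureReal_mono hsub
    _ = (percMeasure half).real (⋂ i ∈ Finset.range k, (circuitEvent (r i))ᶜ) :=
        measurePreserving_dualConfig.measureReal_preimage hmeas.nullMeasurableSet
    _ = ∏ i ∈ Finset.range k, (percMeasure half).real (circuitEvent (r i))ᶜ :=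
        percMeasure_real_biInter half ((pairwise_disjoint_annulusBonds
          (fun i ↦ one_le_two.trans (hr i)) hr').set_pairwise _) fun i _ ↦ hdet i
    _ ≤ ∏ _i ∈ Finset.range k, (1 - x) := by
        refine Finset.prod_le_prod (fun _ _ ↦ measureReal_nonneg) fun i hi ↦ ?_
        rw [probReal_compl_eq_one_sub (isIncreasingLocal_circuitEvent _).measurableSet]
        exact sub_le_sub_left (hx i (Finset.mem_range.1 hi)) 1
    _ = (1 - x) ^ k := by rw [Finset.prod_const, Finset.card_range]

end Circuit

/-! ### Good scales -/

section GoodScale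

variable {s t : ℤ}

/-- A scale at which rectangles of aspect ratio `6` are crossed with probability bounded below by
the universal constant `crossConst`. -/
structure IsGoodScale (s : ℤ) : Prop where
  two_le : 2 ≤ s
  crossConst_le : crossConst ≤ crossProb (6 * s) s

lemma crossConst_pos : 0 < crossConst := by
  unfold crossConst
  positivity

lemma four_mul_le_four_pow_mul (hs : 0 ≤ s) (i : ℕ) : 4 * s ≤ 4 ^ (i + 1) * s :=
  mul_le_mul_of_nonneg_right (le_self_pow₀ (by norm_num) i.succ_ne_zero) hs

lemma IsGoodScale.le_circuitEvent_of_sideProb_ge (hs : IsGoodScale s) (hst : 3 * s ≤ t)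
    (hside : 1 / 8 ≤ sideProb t (Set.Icc 0 s)) {x : ℝ} (hx : x = (1 / 8) ^ 2 * crossConst ^ 4) :
    (x * (x / 2) ^ 4) ^ 4 ≤ (percMeasure half).real (circuitEvent (2 * t)) := by
  have hs₂ := hs.two_le
  have hx₀ : 0 ≤ x := by
    rw [hx]
    exact mul_nonneg (by norm_num) (pow_nonneg crossConst_pos.le 4)
  have hxt : x ≤ crossProb (4 * t) (2 * t) := hx ▸
    crossProb_ge_of_sideProb_ge (by lia) hst crossConst_pos.le hs.crossConst_le hside
  refine pow_four_le_circuitEvent (by lia) (by positivity) ?_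
  calc x * (x / 2) ^ 4 ≤ crossProb (4 * t + (4 : ℕ) * (4 * t - 2 * t)) (2 * t) :=
        mul_pow_le_crossProb hx₀ (by lia) (by lia) hxt 4
    _ = crossProb (6 * (2 * t)) (2 * t) := by congr 1; push_cast; ring

lemma sideProb_le_connEvent (t : ℤ) (I : Set ℤ) :
    sideProb t I ≤ (percMeasure half).real (connEvent (rect (-(2 * t)) 0 (-t) t)
      {v | v.1 = 0 ∧ v.2 ∈ I} {v | v.1 = -(2 * t)}) := by
  rw [connEvent_comm]
  exact sideProb_le_sideEvent (y := 0) (by lia) (by lia) (by lia) (by simp)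

lemma exists_sideProb_lt :
    ∃ K : ℕ, ∀ s, IsGoodScale s → ∃ i < K, sideProb (4 ^ (i + 1) * s) (Set.Icc 0 s) < 1 / 8 := by
  have hpos := crossConst_pos
  obtain ⟨x, hx⟩ : ∃ x : ℝ, x = (1 / 8) ^ 2 * crossConst ^ 4 := ⟨_, rfl⟩
  have hx₀ : 0 < x := hx ▸ by positivity
  obtain ⟨K, hK⟩ : ∃ K : ℕ, (1 - (x * (x / 2) ^ 4) ^ 4) ^ K < 1 / 8 :=
    exists_pow_lt_of_lt_one (by norm_num) (sub_lt_self 1 (by positivity))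
  refine ⟨K + 1, fun s hs ↦ ?_⟩
  by_contra! hside
  have hs₂ := hs.two_le
  have hfour := four_mul_le_four_pow_mul (s := s) (by lia)
  have hcircuit : ∀ i < K, (x * (x / 2) ^ 4) ^ 4 ≤
      (percMeasure half).real (circuitEvent (2 * (4 ^ (i + 1) * s))) := fun i hi ↦
    hs.le_circuitEvent_of_sideProb_ge (by linarith [hfour i]) (hside i (by lia)) hx
  have hsmall := percMeasure_real_connEvent_le_pow (r := fun i ↦ 2 * (4 ^ (i + 1) * s))
    (fun i ↦ by linarith [hfour i])
    (fun i ↦ by rw [pow_succ 4 (i + 1)]; linarith [hfour i]) hcircuit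
    (rect (-(2 * (4 ^ (K + 1) * s))) 0 (-(4 ^ (K + 1) * s)) (4 ^ (K + 1) * s))
    (A := {v | v.1 = 0 ∧ v.2 ∈ Set.Icc 0 s}) (B := {v | v.1 = -(2 * (4 ^ (K + 1) * s))}) ?_ ?_
  · linarith [hside K K.lt_succ_self, sideProb_le_connEvent (4 ^ (K + 1) * s) (Set.Icc 0 s)]
  · rintro i - v ⟨hv, hv₀, hvs⟩
    have := hfour i
    unfold supNorm
    omega
  · intro i hi v hv
    rw [Set.mem_ofPred_eq] at hv
    have hpow : (4 : ℤ) ^ (i + 1 + 1) ≤ 4 ^ (K + 1) := pow_le_pow_right₀ (by norm_num) (by lia)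
    have hmul : 4 * (4 ^ (i + 1) * s) ≤ 4 ^ (K + 1) * s :=
      calc 4 * (4 ^ (i + 1) * s) = 4 ^ (i + 1 + 1) * s := by ring
        _ ≤ 4 ^ (K + 1) * s := mul_le_mul_of_nonneg_right hpow (by lia)
    have := hfour i
    unfold supNorm
    omega

lemma exists_sideQuantile_double_le {K : ℕ} (hs : 1 ≤ s) (hst : s ≤ t) (htK : t ≤ 4 ^ K * s)
    (ht : s < sideQuantile t) :
    ∃ j < 2 * K, sideQuantile (2 * (2 ^ j * t)) ≤ 4 * sideQuantile (2 ^ j * t) := by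
  by_contra! hgrow
  have hlower : ∀ j ≤ 2 * K, 4 ^ j * s < sideQuantile (2 ^ j * t) := by
    intro j hj
    induction j with
    | zero => simpa using ht
    | succ j ih =>
      have hj' := hgrow j hj
      rw [pow_succ' 2, mul_assoc, pow_succ' 4, mul_assoc]
      linarith [ih (by lia)]
  have htpos : 0 < 2 ^ (2 * K) * t := mul_pos (by positivity) (by lia)
  have hupper : sideQuantile (2 ^ (2 * K) * t) ≤ 4 ^ (2 * K) * s :=
    calc (sideQuantile (2 ^ (2 * K) * t) : ℤ) ≤ 2 ^ (2 * K) * t := sideQuantile_le (by lia)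
      _ ≤ 2 ^ (2 * K) * (4 ^ K * s) := by gcongr
      _ = 4 ^ (2 * K) * s := by rw [pow_mul, two_mul, pow_add]; ring
  exact (hlower (2 * K) le_rfl).not_ge hupper

lemma isGoodScale_five_mul (ht : 1 ≤ t) (h : sideQuantile (2 * t) ≤ 4 * sideQuantile t) :
    IsGoodScale (5 * t) where
  two_le := by lia
  crossConst_le := by
    rw [← mul_assoc]
    exact crossConst_le_crossProb ht h

lemma exists_isGoodScale_le_mul : ∃ C : ℕ, 1 ≤ C ∧
    ∀ s, IsGoodScale s → ∃ s', IsGoodScale s' ∧ 3 * s < s' ∧ s' ≤ C * s := by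
  obtain ⟨K, hK⟩ := exists_sideProb_lt
  refine ⟨5 * (2 ^ (2 * K) * 4 ^ K), Nat.one_le_iff_ne_zero.2 (by positivity), fun s hs ↦ ?_⟩
  obtain ⟨i, hi, hside⟩ := hK s hs
  have hs₂ := hs.two_le
  set t := 4 ^ (i + 1) * s
  have hst : 4 * s ≤ t := four_mul_le_four_pow_mul (by lia) i
  have htK : t ≤ 4 ^ K * s :=
    mul_le_mul_of_nonneg_right (pow_le_pow_right₀ (by norm_num) hi) (by lia)
  obtain ⟨j, hj, hdouble⟩ := exists_sideQuantile_double_le (K := K) (by lia) (by lia) htK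
    (lt_sideQuantile (by lia) hside)
  have htj : t ≤ 2 ^ j * t := le_mul_of_one_le_left (by lia) (one_le_pow₀ (by norm_num))
  refine ⟨5 * (2 ^ j * t), isGoodScale_five_mul (by lia) hdouble, by lia, ?_⟩
  calc 5 * (2 ^ j * t) ≤ 5 * (2 ^ (2 * K) * (4 ^ K * s)) := by gcongr; norm_num
    _ = (5 * (2 ^ (2 * K) * 4 ^ K) : ℕ) * s := by push_cast; ring

lemma exists_isGoodScale_le_ten : ∃ s, IsGoodScale s ∧ s ≤ 10 := by
  by_cases h : sideQuantile (2 * 1) ≤ 4 * sideQuantile 1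
  · exact ⟨5 * 1, isGoodScale_five_mul le_rfl h, by norm_num⟩
  · have hle := sideQuantile_le (n := 2 * 2) (by norm_num)
    exact ⟨5 * 2, isGoodScale_five_mul one_le_two (by norm_num at *; lia), by norm_num⟩

lemma exists_goodScale_seq : ∃ (C : ℕ) (r : ℕ → ℤ), 1 ≤ C ∧
    ∀ k, IsGoodScale (r k) ∧ 3 * r k < r (k + 1) ∧ r k ≤ 10 * C ^ k := by
  obtain ⟨C, hC, hnext⟩ := exists_isGoodScale_le_mul
  obtain ⟨s, hs, hs₁₀⟩ := exists_isGoodScale_le_ten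
  choose! next hgood hlt hle using hnext
  have hiter (k : ℕ) : next^[k + 1] s = next (next^[k] s) := Function.iterate_succ_apply' next k s
  have hseq (k : ℕ) : IsGoodScale (next^[k] s) := by
    induction k with
    | zero => exact hs
    | succ k ih => exact hiter k ▸ hgood _ ih
  refine ⟨C, fun k ↦ next^[k] s, hC, fun k ↦ ⟨hseq k, (hlt _ (hseq k)).trans_eq (hiter k).symm, ?_⟩⟩
  induction k with
  | zero => simpa using hs₁₀
  | succ k ih =>
    calc next^[k + 1] s ≤ C * next^[k] s := hiter k ▸ hle _ (hseq k)
      _ ≤ C * (10 * C ^ k) := by gcongr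
      _ = 10 * C ^ (k + 1) := by ring

end GoodScale

/-! ### Polynomial decay of the one-arm probability -/

section Decay

lemma exists_armProb_le_pow : ∃ C : ℕ, 2 ≤ C ∧
    ∀ n k : ℕ, C ^ k ≤ n → armProb half n ≤ (1 - crossConst ^ 4) ^ k := by
  obtain ⟨C, r, hC, hr⟩ := exists_goodScale_seq
  have hr₂ (i : ℕ) := (hr i).1.two_le
  refine ⟨21 * C, by lia, fun n k hn ↦ ?_⟩
  refine percMeasure_real_connEvent_le_pow hr₂ (fun i ↦ (hr i).2.1) (fun i _ ↦
    pow_four_le_circuitEvent (by linarith [hr₂ i]) crossConst_pos.le (hr i).1.crossConst_le) _ ?_ ?_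
  · rintro i - v rfl
    rw [supNorm_zero]
    linarith [hr₂ i]
  · intro i hi v hv
    have hpow : 21 * C ^ i ≤ n :=
      calc 21 * C ^ i ≤ 21 ^ (i + 1) * C ^ (i + 1) := by
            gcongr
            · exact le_self_pow₀ (by norm_num) i.succ_ne_zero
            · exact i.le_succ
        _ = (21 * C) ^ (i + 1) := (mul_pow _ _ _).symm
        _ ≤ (21 * C) ^ k := Nat.pow_le_pow_right (by lia) hi
        _ ≤ n := hn
    have hone : 1 ≤ C ^ i := Nat.one_le_pow _ _ hC
    have hle := (hr i).2.2
    rw [Set.mem_ofPred_eq] at hv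
    zify at hpow hone
    linarith

/-- The four bonds having the origin as an end. -/
def originBonds : Finset Bond :=
  {((0, 0), false), ((0, 0), true), ((-1, 0), false), ((0, -1), true)}

lemma Joins.mem_originBonds {e : Bond} {v : Site} (h : Joins e 0 v) : e ∈ originBonds := by
  obtain ⟨⟨x, y⟩, _ | _⟩ := e <;>
    simp only [Joins, tip, Prod.ext_iff, originBonds, Finset.mem_insert, Finset.mem_singleton,
      Prod.fst_zero, Prod.snd_zero, Bool.false_eq_true, if_true, if_false] at h ⊢ <;>
    lia

lemma armProb_le (p : unitInterval) {n : ℕ} (hn : 1 ≤ n) : armProb p n ≤ 1 - (1 - p) ^ 4 := by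
  set F := originBonds
  have hdet (e : Bond) : DeterminedBy {e} {ω : BondConfig | ω e = true} :=
    .of_imp fun ω ω' hω h ↦ (hω e (Finset.mem_singleton_self e)).symm.trans h
  have hmeas : MeasurableSet (⋂ e ∈ F, {ω : BondConfig | ω e = true}ᶜ) :=
    Finset.measurableSet_biInter _ fun e _ ↦ (hdet e).compl.measurableSet
  have hclosed : (percMeasure p).real (⋂ e ∈ F, {ω : BondConfig | ω e = true}ᶜ) = (1 - p) ^ 4 := by
    have hbond (e : Bond) : (percMeasure p).real {ω : BondConfig | ω e = true}ᶜ = 1 - p := by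
      rw [probReal_compl_eq_one_sub (hdet e).measurableSet, percMeasure_real_open]
    rw [percMeasure_real_biInter p (F := fun e ↦ {e})
      (fun _ _ _ _ h ↦ Finset.disjoint_singleton.2 h) fun e _ ↦ (hdet e).compl,
      Finset.prod_congr rfl fun e _ ↦ hbond e, Finset.prod_const]
    rfl
  rw [← hclosed, ← probReal_compl_eq_one_sub hmeas]
  refine measureReal_mono ?_
  rintro ω ⟨u, -, v, -, rfl, hv, h⟩ hω
  rw [Set.mem_ofPred_eq] at hv
  rcases Relation.ReflTransGen.cases_head h with rfl | ⟨w, ⟨⟨e, he, hjoins⟩, -⟩, -⟩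
  · rw [supNorm_zero] at hv
    lia
  · exact Set.mem_iInter₂.1 hω e hjoins.mem_originBonds he

lemma exists_le_rpow_neg {f : ℕ → ℝ} {ρ : ℝ} {C : ℕ} (hρ₀ : 0 < ρ) (hρ₁ : ρ < 1) (hC : 2 ≤ C)
    (hf : ∀ n, 1 ≤ n → f n ≤ ρ) (hfC : ∀ n k : ℕ, C ^ k ≤ n → f n ≤ ρ ^ k) :
    ∃ α : ℝ, 0 < α ∧ ∀ n : ℕ, 1 ≤ n → f n ≤ (n : ℝ) ^ (-α) := by
  have hC₁ : (1 : ℝ) < C := by exact_mod_cast hC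
  have hneg : Real.logb C ρ < 0 := Real.logb_neg hC₁ hρ₀ hρ₁
  refine ⟨-Real.logb C ρ / 2, by linarith, fun n hn ↦ ?_⟩
  obtain ⟨m, hfm, hnm⟩ : ∃ m : ℕ, f n ≤ ρ ^ m ∧ n ≤ C ^ (2 * m) := by
    have hlt : n < C ^ (Nat.log C n + 1) := Nat.lt_pow_succ_log_self hC n
    rcases Nat.eq_zero_or_pos (Nat.log C n) with hzero | hpos
    · rw [hzero] at hlt
      exact ⟨1, by simpa using hf n hn, hlt.le.trans (Nat.pow_le_pow_right (by lia) (by lia))⟩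
    · exact ⟨Nat.log C n, hfC n _ (Nat.pow_log_le_self C (by lia)),
        hlt.le.trans (Nat.pow_le_pow_right (by lia) (by lia))⟩
  calc f n ≤ ρ ^ m := hfm
    _ = ((C : ℝ) ^ Real.logb C ρ) ^ m := by rw [Real.rpow_logb (by linarith) hC₁.ne' hρ₀]
    _ = ((C : ℝ) ^ (2 * m)) ^ (-(-Real.logb C ρ / 2)) := by
      rw [← Real.rpow_natCast, ← Real.rpow_natCast, ← Real.rpow_mul (by positivity),
        ← Real.rpow_mul (by positivity)]
      congr 1
      push_cast
      ring
    _ ≤ (n : ℝ) ^ (-(-Real.logb C ρ / 2)) :=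
      Real.rpow_le_rpow_of_nonpos (by exact_mod_cast hn) (by exact_mod_cast hnm) (by linarith)

lemma exists_armProb_half_le_rpow_neg :
    ∃ α : ℝ, 0 < α ∧ ∀ n : ℕ, 1 ≤ n → armProb half n ≤ (n : ℝ) ^ (-α) := by
  obtain ⟨C, hC, hpow⟩ := exists_armProb_le_pow
  have hcirc : crossConst ^ 4 < 1 := pow_lt_one₀ crossConst_pos.le
    (pow_lt_one₀ (by norm_num) (by norm_num) (by norm_num)) (by norm_num)
  refine exists_le_rpow_neg (ρ := max (1 - crossConst ^ 4) (15 / 16)) (by positivity)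
    (max_lt (sub_lt_self 1 (pow_pos crossConst_pos 4)) (by norm_num)) hC (fun n hn ↦ ?_)
    fun n k hn ↦ (hpow n k hn).trans
      (pow_le_pow_left₀ (sub_nonneg.2 hcirc.le) (le_max_left _ _) k)
  refine (armProb_le half hn).trans (le_trans ?_ (le_max_right _ _))
  rw [coe_half]
  norm_num

end Decay

/-! ### The square lattice in coordinates -/

section Coordinates

/-- The site `v`, as a vertex of `ℤ²`. -/
def toVertex : Site ≃ Vertex 2 := (finTwoArrowEquiv ℤ).symm

lemma adj_toVertex {u v : Site} : adj (toVertex u) (toVertex v) ↔ Nbr u v := by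
  simp only [adj, toVertex, Nbr, finTwoArrowEquiv_symm_apply, Fin.sum_univ_two,
    Matrix.cons_val_zero, Matrix.cons_val_one]
  lia

lemma origin_two : origin 2 = toVertex 0 := by
  ext i; fin_cases i <;> rfl

lemma toVertex_mem_box {n : ℕ} {v : Site} : toVertex v ∈ box 2 n ↔ supNorm v ≤ n := by
  simp only [box, toVertex, supNorm, Set.mem_ofPred_eq, Fin.forall_fin_two, abs_le,
    finTwoArrowEquiv_symm_apply, Matrix.cons_val_zero, Matrix.cons_val_one]
  omega

lemma exists_nbr_supNorm (v : Site) : ∃ w, Nbr v w ∧ supNorm w = supNorm v + 1 := by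
  have hv : v.1 = supNorm v ∨ -v.1 = supNorm v ∨ v.2 = supNorm v ∨ -v.2 = supNorm v := by
    unfold supNorm; omega
  rcases hv with h | h | h | h
  · exact ⟨(v.1 + 1, v.2), by simp [Nbr], by simp only [supNorm] at *; omega⟩
  · exact ⟨(v.1 - 1, v.2), by simp [Nbr], by simp only [supNorm] at *; omega⟩
  · exact ⟨(v.1, v.2 + 1), by simp [Nbr], by simp only [supNorm] at *; omega⟩
  · exact ⟨(v.1, v.2 - 1), by simp [Nbr], by simp only [supNorm] at *; omega⟩

lemma toVertex_mem_boxBoundary {n : ℕ} {v : Site} :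
    toVertex v ∈ boxBoundary 2 n ↔ supNorm v = n := by
  simp only [boxBoundary, Set.mem_ofPred_eq, toVertex.surjective.exists, adj_toVertex,
    toVertex_mem_box, not_le]
  constructor
  · rintro ⟨hv, w, hvw, hw⟩
    have := isStepLipschitz_supNorm v w hvw
    lia
  · intro hv
    obtain ⟨w, hvw, hw⟩ := exists_nbr_supNorm v
    exact ⟨hv.le, w, hvw, by lia⟩

lemma Nbr.exists_joins {u v : Site} (h : Nbr u v) : ∃ e, Joins e u v := by
  obtain ⟨x, y⟩ := u
  obtain ⟨x', y'⟩ := v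
  simp only [Nbr] at h
  rcases h with ⟨rfl, rfl | rfl⟩ | ⟨rfl, rfl | rfl⟩
  · exact ⟨((x, y), true), .inl ⟨rfl, rfl⟩⟩
  · exact ⟨((x, y'), true), .inr ⟨rfl, rfl⟩⟩
  · exact ⟨((x, y), false), .inl ⟨rfl, rfl⟩⟩
  · exact ⟨((x', y), false), .inr ⟨rfl, rfl⟩⟩

/-- The bond `e`, as an edge of `ℤ²`. -/
def toEdge (e : Bond) : Edge 2 :=
  ⟨s(toVertex e.1, toVertex (tip e)), _, _, adj_toVertex.2 (nbr_tip e), rfl⟩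

lemma Joins.coe_toEdge {e : Bond} {u v : Site} (h : Joins e u v) :
    (toEdge e : Sym2 (Vertex 2)) = s(toVertex u, toVertex v) := by
  rcases h with ⟨rfl, rfl⟩ | ⟨rfl, rfl⟩
  exacts [rfl, Sym2.eq_swap]

lemma Joins.eq_of_joins {e f : Bond} (h : Joins f e.1 (tip e)) : e = f := by
  obtain ⟨⟨x, y⟩, _ | _⟩ := e <;> obtain ⟨⟨x', y'⟩, _ | _⟩ := f <;>
    simp [Joins, tip] at h ⊢ <;> lia

lemma bijective_toEdge : Function.Bijective toEdge := by
  refine ⟨fun e f h ↦ Joins.eq_of_joins ?_, ?_⟩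
  · have h : s(toVertex e.1, toVertex (tip e)) = s(toVertex f.1, toVertex (tip f)) :=
      congrArg Subtype.val h
    simpa only [Sym2.eq_iff, toVertex.apply_eq_iff_eq, Joins, and_comm] using h
  · rintro ⟨_, x, y, h, rfl⟩
    obtain ⟨u, rfl⟩ := toVertex.surjective x
    obtain ⟨v, rfl⟩ := toVertex.surjective y
    obtain ⟨e, he⟩ := (adj_toVertex.1 h).exists_joins
    exact ⟨e, Subtype.ext he.coe_toEdge⟩

/-- The correspondence between the bonds and the edges of `ℤ²`. -/
noncomputable def edgeEquiv : Bond ≃ Edge 2 := Equiv.ofBijective toEdge bijective_toEdge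

/-- The configuration `ω`, read on the bonds. -/
noncomputable def toBondConfig (ω : Config 2) : BondConfig := fun e ↦ ω (edgeEquiv e)

variable {ω : Config 2} {u v : Site} {n : ℕ}

lemma step_toVertex : step ω (toVertex u) (toVertex v) ↔ OpenStep (toBondConfig ω) u v := by
  have hω {e : Bond} (he : Joins e u v) (h : adj (toVertex u) (toVertex v)) :
      toBondConfig ω e = ω ⟨s(toVertex u, toVertex v), _, _, h, rfl⟩ :=
    congrArg ω (Subtype.ext he.coe_toEdge)
  constructor
  · rintro ⟨h, ho⟩
    obtain ⟨e, he⟩ := (adj_toVertex.1 h).exists_joins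
    exact ⟨e, (hω he h).trans ho, he⟩
  · intro h
    obtain ⟨e, ho, he⟩ := id h
    have hadj : adj (toVertex u) (toVertex v) := adj_toVertex.2 h.nbr
    exact ⟨hadj, (hω he hadj).symm.trans ho⟩

lemma conn_toVertex :
    Conn ω (toVertex u) (toVertex v) ↔ ConnIn (toBondConfig ω) Set.univ u v := by
  constructor
  · intro h
    have hstep (x y : Vertex 2) (h : step ω x y) :
        OpenStep (toBondConfig ω) (toVertex.symm x) (toVertex.symm y) := by
      rwa [← step_toVertex, toVertex.apply_symm_apply, toVertex.apply_symm_apply]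
    simpa using! h.lift toVertex.symm fun x y h ↦ ⟨hstep x y h, Set.mem_univ _, Set.mem_univ _⟩
  · exact fun h ↦ Relation.ReflTransGen.lift toVertex (fun _ _ h ↦ step_toVertex.2 h.1) _ _ h

lemma mem_zeroToBoundary : ω ∈ ZeroToBoundary 2 n ↔
    ∃ v, supNorm v = n ∧ ConnIn (toBondConfig ω) Set.univ 0 v := by
  simp only [ZeroToBoundary, Set.mem_ofPred_eq, toVertex.surjective.exists, origin_two,
    conn_toVertex, toVertex_mem_boxBoundary]

lemma ConnIn.exists_supNorm_eq {η : BondConfig} (h : ConnIn η Set.univ 0 v) (hv : n ≤ supNorm v) :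
    ∃ w, supNorm w = n ∧ ConnIn η (square n) 0 w := by
  obtain ⟨w, -, hw, h⟩ := h.exists_first isStepLipschitz_supNorm (Set.mem_univ _)
    (by simp [supNorm_zero]) hv
  exact ⟨w, hw, h.mono fun _ h ↦ h.2⟩

lemma preimage_armEvent : toBondConfig ⁻¹' armEvent n = ZeroToBoundary 2 n := by
  ext ω
  rw [mem_zeroToBoundary]
  constructor
  · rintro ⟨_, -, v, -, rfl, hv, h⟩
    exact ⟨v, hv, h.mono (Set.subset_univ _)⟩
  · rintro ⟨v, hv, h⟩
    obtain ⟨w, hw, h⟩ := ConnIn.exists_supNorm_eq h hv.ge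
    exact ⟨0, by simp [square, supNorm_zero], w, hw.le, rfl, hw, h⟩

lemma antitone_zeroToBoundary : Antitone (ZeroToBoundary 2) := by
  intro k n hkn ω h
  rw [mem_zeroToBoundary] at *
  obtain ⟨v, hv, h⟩ := h
  obtain ⟨w, hw, h⟩ := ConnIn.exists_supNorm_eq (n := k) h (by lia)
  exact ⟨w, hw, h.mono (Set.subset_univ _)⟩

lemma zeroToInfinity_eq_iInter : ZeroToInfinity 2 = ⋂ n, ZeroToBoundary 2 n := by
  ext ω
  have hcluster : ω ∈ ZeroToInfinity 2 ↔ (clusterIn (toBondConfig ω) Set.univ 0).Infinite := by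
    rw [← Set.infinite_image_iff toVertex.injective.injOn, toVertex.image_eq_preimage_symm]
    simp only [ZeroToInfinity, cluster, clusterIn, origin_two, Set.mem_ofPred_eq,
      Set.preimage_ofPred_eq, ← conn_toVertex, toVertex.apply_symm_apply]
  rw [hcluster, Set.mem_iInter]
  simp only [mem_zeroToBoundary]
  constructor
  · intro h n
    obtain ⟨v, hv, hvn⟩ := h.exists_notMem_finite (finite_square n)
    obtain ⟨w, hw, hvw⟩ := ConnIn.exists_supNorm_eq hv (not_le.1 hvn).le
    exact ⟨w, hw, hvw.mono (Set.subset_univ _)⟩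
  · intro h
    choose f hf hconn using h
    refine Set.infinite_of_injective_forall_mem (f := f) (fun m n hmn ↦ ?_) hconn
    have := congrArg supNorm hmn
    rwa [hf, hf, Nat.cast_inj] at this

end Coordinates

section Transfer

variable {p : unitInterval} {μ : Measure (Config 2)}

lemma IsBernoulli.measurePreserving_toBondConfig (h : IsBernoulli 2 p μ) :
    MeasurePreserving toBondConfig μ (percMeasure p) := by
  rw [percMeasure_eq_of_cylinder h.2]
  exact measurePreserving_comp_equiv p edgeEquiv

lemma measurableSet_zeroToBoundary (n : ℕ) : MeasurableSet (ZeroToBoundary 2 n) := by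
  rw [← preimage_armEvent]
  exact (determinedBy_armEvent n).measurableSet.preimage
    (measurable_pi_lambda _ fun _ ↦ measurable_pi_apply _)

lemma IsBernoulli.zeroToBoundary (h : IsBernoulli 2 p μ) (n : ℕ) :
    μ (ZeroToBoundary 2 n) = ENNReal.ofReal (armProb p n) := by
  rw [← preimage_armEvent, h.measurePreserving_toBondConfig.measure_preimage
    (determinedBy_armEvent n).measurableSet.nullMeasurableSet, armProb, ofReal_measureReal]

lemma IsBernoulli.tendsto_armProb (h : IsBernoulli 2 p μ) :
    Filter.Tendsto (fun n ↦ ENNReal.ofReal (armProb p n)) Filter.atTop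
      (nhds (μ (ZeroToInfinity 2))) := by
  have := h.1
  simp only [← h.zeroToBoundary, zeroToInfinity_eq_iInter]
  exact tendsto_measure_iInter_atTop
    (fun n ↦ (measurableSet_zeroToBoundary n).nullMeasurableSet) antitone_zeroToBoundary
    ⟨0, measure_ne_top _ _⟩

lemma IsBernoulli.zeroToInfinity_half (h : IsBernoulli 2 half μ) : μ (ZeroToInfinity 2) = 0 := by
  obtain ⟨α, hα, hle⟩ := exists_armProb_half_le_rpow_neg
  have hlim : Filter.Tendsto (fun n : ℕ ↦ ENNReal.ofReal ((n : ℝ) ^ (-α))) Filter.atTop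
      (nhds 0) := by
    simpa using ENNReal.tendsto_ofReal
      ((tendsto_rpow_neg_atTop hα).comp tendsto_natCast_atTop_atTop)
  refine le_antisymm (le_of_tendsto_of_tendsto h.tendsto_armProb hlim ?_) zero_le
  filter_upwards [Filter.eventually_ge_atTop 1] with n hn
  exact ENNReal.ofReal_le_ofReal (hle n hn)

lemma IsBernoulli.zeroToInfinity_pos (h : IsBernoulli 2 p μ) (hp : half < p) :
    0 < μ (ZeroToInfinity 2) := by
  have hpos : 0 < ENNReal.ofReal (1 - Real.exp (1 - 2 * p)) := by
    have : (1 / 2 : ℝ) < p := hp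
    rw [ENNReal.ofReal_pos, sub_pos, Real.exp_lt_one_iff]
    linarith
  exact hpos.trans_le (ge_of_tendsto' h.tendsto_armProb fun n ↦
    ENNReal.ofReal_le_ofReal (one_sub_exp_le_armProb hp.le n))

end Transfer

/-- Critical Bernoulli percolation on `ℤ²`: `p_c(ℤ²) = 1/2`, and there exists `α > 0`
with `(1/2)·n⁻¹ ≤ ℙ_{1/2}[0 ↔ ∂Λ_n] ≤ n^{−α}` for all `n ≥ 1`; in particular
`θ(1/2) = 0`. -/
theorem critical_point_Z2
    (μ : ℝ → Measure (Config 2))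
    (hμ : ∀ p ∈ Set.Ioo (0 : ℝ) 1, IsBernoulli 2 p (μ p)) :
    sSup {p : ℝ | p ∈ Set.Ioo (0 : ℝ) 1 ∧ μ p (ZeroToInfinity 2) = 0} = 1 / 2 ∧
    (∃ α : ℝ, 0 < α ∧ ∀ n : ℕ, 1 ≤ n →
      ENNReal.ofReal ((1 / 2) * (n : ℝ)⁻¹) ≤ μ (1 / 2) (ZeroToBoundary 2 n) ∧
      μ (1 / 2) (ZeroToBoundary 2 n) ≤ ENNReal.ofReal ((n : ℝ) ^ (-α))) ∧
    μ (1 / 2) (ZeroToInfinity 2) = 0 := by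
  have half_mem : (1 / 2 : ℝ) ∈ Set.Ioo (0 : ℝ) 1 := by norm_num
  have hhalf : IsBernoulli 2 half (μ (1 / 2)) := hμ _ half_mem
  obtain ⟨α, hα, hle⟩ := exists_armProb_half_le_rpow_neg
  refine ⟨IsGreatest.csSup_eq ⟨⟨half_mem, hhalf.zeroToInfinity_half⟩, ?_⟩,
    ⟨α, hα, fun n hn ↦ ?_⟩, hhalf.zeroToInfinity_half⟩
  · rintro p ⟨hp, h0⟩
    by_contra! hlt
    have hpos : 0 < μ p (ZeroToInfinity 2) :=
      IsBernoulli.zeroToInfinity_pos (p := ⟨p, Set.Ioo_subset_Icc_self hp⟩) (hμ p hp) hlt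
    exact hpos.ne' h0
  · rw [hhalf.zeroToBoundary]
    refine ⟨ENNReal.ofReal_le_ofReal ?_, ENNReal.ofReal_le_ofReal (hle n hn)⟩
    rw [← div_eq_mul_inv, div_le_iff₀' (by exact_mod_cast hn)]
    exact one_half_le_mul_armProb hn
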